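/- In oriented percolation, for every N ≥ 1, the coefficient Π_p^{(N)}(x) := Σ_{b⃗_N, b} Σ_{j=1}^N P_p( Ẽ^{(N)}_{b⃗_N}(x) ∩ {b = b_j or b ∈ piv(b̄_j, b̲_{j+1})} ) satisfies Σ_{x} Π_p^{(N)}(x) ≤ N (1 + 2T_p^{(1)}) ( (T_p^{(1)} + T̃_p)(2T_p^{(1)})^{N-1} + H_p (2T_p^{(1)})^{(N-2)∨0} ), where T_p^{(1)} is the triangle, T̃_p = sup_x Σ_v (q_p*φ_p*q_p*φ_p)(v)(q_p*φ_p)(x;v) the modified triangle, and H_p the H-shaped diagram sup_{x,y} Σ_{u,v,w} (q_p*φ_p)(u)(φ_p*q_p*φ_p)(u;v)(q_p*φ_p)(x;v)(q_p*φ_p)(u;w)(q_p*φ_p)(v;y+w). -/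

import Mathlib

/-!
Put `φ = φ_p` and `ψ = q * φ`. The bound follows from the inclusion of the lace-expansion event
in the event that a ladder-shaped diagram of bond-disjoint occupied paths exists, and from the van
den Berg–Kesten inequality, which bounds the probability of a ladder by a product of two-point
functions.

*Ladders.* On `E(b, x; C̃^b(y))` there are bond-disjoint occupied paths `b̄ → x` and `y → x`,
the latter avoiding `b` (`switch_aux`, `Eevent.exists_paths`). This is a switching argument: no
bond whose bottom endpoint is in `C̃^b(y)` is needed for `b̄ → x`, so a common bond of two such
paths can be circumvented, and the time of the last common bond decreases. Cutting the path from
`y` at its last visit to the part of the diagram already built makes it disjoint from that part, so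
that consecutive rungs are disjoint (`Chain.exists_ladder`). A bond that is pivotal for
`b̄_j → b̲_{j+1}` lies on the line from `b̄_j`, since every occupied path uses it.

*Inequality for disjoint paths.* `bk_fin` is proved by replacing one bond at a time by two
independent copies; `bk` passes to infinitely many bonds by continuity from below along finite
bond sets.

*Sums.* Let `T`, `T̃`, `H` be the triangle, the modified triangle and the H-shaped diagram. The
sum over one rung, with one of the lines at its ends, is at most `2T` since the next side line
starts from either strand; this may be done from the bottom or from the top of the rung
(`tsum_rung_right`, `tsum_rung_left`). The two ends of the ladder contribute `1 + 2T`
(`tsum_start_le`) and `T` (`ladSum_le`). A bond marked as pivotal on a rung turns one factor `φ`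
on the line through `b_j` into `φ * q * φ`. On the part of the line below the vertex where the next
side line starts this replaces `T` by `T̃`, and on the part above it this produces `H`, with the
bottom of the next rung as the second half of the `H` (`tsum_H_ladSum_le`, `tsum_La_mk_le`).
-/

open MeasureTheory
open scoped ENNReal

/-- Space-time vertices of oriented percolation on `ℤ^d × ℤ`. -/
abbrev Vert (d : ℕ) := (Fin d → ℤ) × ℤ
/-- Oriented bonds. -/
abbrev Bond (d : ℕ) := Vert d × Vert d
/-- Bond configurations. -/
abbrev Config (d : ℕ) := Bond d → Bool

variable {d : ℕ}

/-- The bond `b` is occupied in `ω`. -/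
def Occ (ω : Config d) (b : Bond d) : Prop := ω b = true

/-- `Conn ω u x`: `u → x`, i.e. there is a path of occupied oriented bonds from `u` to `x`. -/
inductive Conn (ω : Config d) : Vert d → Vert d → Prop
  | refl (v : Vert d) : Conn ω v v
  | step {u v w : Vert d} : Occ ω (u, v) → Conn ω v w → Conn ω u w

/-- The connection event `{u → x}`. -/
def connEvent (u x : Vert d) : Set (Config d) := {ω | Conn ω u x}

/-- The event `{b → x}`: `b` is occupied and its top endpoint is connected to `x`. -/
def bondConnEvent (b : Bond d) (x : Vert d) : Set (Config d) :=
  {ω | Occ ω b ∧ Conn ω b.2 x}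

/-- `E` occurs on the bond set `B` in configuration `ω`. -/
def OccursOn (E : Set (Config d)) (B : Set (Bond d)) (ω : Config d) : Prop :=
  ∀ ω' : Config d, (∀ b ∈ B, ω' b = ω b) → ω' ∈ E

/-- Disjoint occurrence `E₁ ∘ E₂`. -/
def DisjOcc (E₁ E₂ : Set (Config d)) : Set (Config d) :=
  {ω | ∃ B₁ B₂ : Set (Bond d), Disjoint B₁ B₂ ∧ OccursOn E₁ B₁ ω ∧ OccursOn E₂ B₂ ω}

/-- Triple disjoint occurrence `E₁ ∘ E₂ ∘ E₃`. -/
def DisjOcc3 (E₁ E₂ E₃ : Set (Config d)) : Set (Config d) :=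
  {ω | ∃ B₁ B₂ B₃ : Set (Bond d), Disjoint B₁ B₂ ∧ Disjoint B₁ B₃ ∧ Disjoint B₂ B₃ ∧
    OccursOn E₁ B₁ ω ∧ OccursOn E₂ B₂ ω ∧ OccursOn E₃ B₃ ω}

/-- The double-connection event `{u ⇒ v}`: two bond-disjoint occupied paths from `u` to `v`. -/
def DoubleConn (u v : Vert d) : Set (Config d) := DisjOcc (connEvent u v) (connEvent u v)

/-- Configuration with the status of bond `b` set to `val`. -/
def flipBond (ω : Config d) (b : Bond d) (val : Bool) : Config d :=
  fun b' => if b' = b then val else ω b'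

/-- `b ∈ piv(v, x)`: `b` is pivotal for `{v → x}` in `ω`. -/
def Pivotal (ω : Config d) (b : Bond d) (v x : Vert d) : Prop :=
  Conn (flipBond ω b true) v x ∧ ¬ Conn (flipBond ω b false) v x

/-- Connection avoiding the bond `b`. -/
inductive ConnAvoid (ω : Config d) (b : Bond d) : Vert d → Vert d → Prop
  | refl (v : Vert d) : ConnAvoid ω b v v
  | step {u v w : Vert d} : (u, v) ≠ b → Occ ω (u, v) → ConnAvoid ω b v w →
      ConnAvoid ω b u w

/-- `C̃^b(y)`: vertices reachable from `y` without using the bond `b`. -/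
def tilC (ω : Config d) (b : Bond d) (y : Vert d) : Set (Vert d) :=
  {x | ConnAvoid ω b y x}

/-- The lace-expansion event `E(b, x; C̃^b(y))`: `b → x` with `x ∈ C̃^b(y)` and no pivotal
bond for `{b̄ → x}` has its bottom endpoint in `C̃^b(y)`. -/
def Eevent (b : Bond d) (x y : Vert d) : Set (Config d) :=
  {ω | Occ ω b ∧ Conn ω b.2 x ∧ x ∈ tilC ω b y ∧
    ∀ b' : Bond d, Pivotal ω b' b.2 x → b'.1 ∉ tilC ω b y}
/-- `μ` is the law of oriented percolation with bond-occupation kernel `q`: a probability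
measure under which bonds are independently occupied, bond `(u,v)` with probability
`q u v`, and only bonds pointing one step forward in time may be occupied. -/
def IsBernoulliField (μ : Measure (Config d)) (q : Vert d → Vert d → ℝ≥0∞) : Prop :=
  IsProbabilityMeasure μ ∧ (∀ u v : Vert d, q u v ≤ 1) ∧
  (∀ u v : Vert d, v.2 ≠ u.2 + 1 → q u v = 0) ∧
  ∀ (s : Finset (Bond d)) (f : Bond d → Bool),
    μ {ω | ∀ b ∈ s, ω b = f b} =
      ∏ b ∈ s, (if f b then q b.1 b.2 else 1 - q b.1 b.2)

/-- The lace-expansion event `Ẽ^{(N)}_{b⃗}(x)` (for `N ≥ 1`), with `b̲_{N+1} = x` and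
`b̄₀ = o`. -/
def laceEvent (N : ℕ) (bb : Fin N → Bond d) (x : Vert d) : Set (Config d) :=
  {ω | (∀ h0 : 0 < N, ω ∈ DoubleConn (0 : Vert d) (bb ⟨0, h0⟩).1) ∧
    ∀ i : Fin N, ω ∈ Eevent (bb i)
      (if h : i.1 + 1 < N then (bb ⟨i.1 + 1, h⟩).1 else x)
      (if h : 0 < i.1 then
        (bb ⟨i.1 - 1, lt_of_le_of_lt (Nat.sub_le _ _) i.isLt⟩).2 else (0 : Vert d))}

/-- The lace-expansion coefficients `π_p^{(N)}(x)`. -/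
noncomputable def piCoef (μ : Measure (Config d)) : ℕ → Vert d → ℝ≥0∞
  | 0, x => μ (DoubleConn 0 x)
  | (N + 1), x => ∑' bb : Fin (N + 1) → Bond d, μ (laceEvent (N + 1) bb x)

/-- Two-point function `φ_p(x) = P_p(o → x)`. -/
noncomputable def phi (μ : Measure (Config d)) : Vert d → ℝ≥0∞ :=
  fun x => μ (connEvent 0 x)

/-- Space-time convolution of translation-invariant kernels. -/
noncomputable def conv (f g : Vert d → ℝ≥0∞) : Vert d → ℝ≥0∞ :=
  fun x => ∑' v, f v * g (x - v)

/-- `m`-weighting: `f^{(m)}(x) = f(x) m^{τ_x}`. -/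
noncomputable def wt (m : ℝ≥0∞) (f : Vert d → ℝ≥0∞) : Vert d → ℝ≥0∞ :=
  fun x => f x * m ^ x.2

/-- The weighted open triangle
`T_p^{(m)} = sup_x Σ_v (q*φ*φ)(v) · (m q * φ^{(m)})(x; v)`. -/
noncomputable def Tri (μ : Measure (Config d)) (q : Vert d → ℝ≥0∞) (m : ℝ≥0∞) : ℝ≥0∞ :=
  ⨆ x : Vert d, ∑' v : Vert d,
    conv (conv q (phi μ)) (phi μ) v * conv (wt m q) (wt m (phi μ)) (v - x)
/-- `Π_p^{(N)}(x) = Σ_{b⃗_N, b} Σ_{j=1}^N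
P_p(Ẽ^{(N)}_{b⃗_N}(x) ∩ {b = b_j or b ∈ piv(b̄_j, b̲_{j+1})})`. -/
noncomputable def PiCoef (μ : Measure (Config d)) (N : ℕ) (x : Vert d) : ℝ≥0∞ :=
  ∑' bb : Fin N → Bond d, ∑' b : Bond d, ∑ j : Fin N,
    μ (laceEvent N bb x ∩
      {ω | b = bb j ∨ Pivotal ω b (bb j).2
        (if h : j.1 + 1 < N then (bb ⟨j.1 + 1, h⟩).1 else x)})

/-- The modified triangle `T̃_p = sup_x Σ_v (q*φ*q*φ)(v) (q*φ)(x;v)`. -/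
noncomputable def TriTilde (μ : Measure (Config d)) (q : Vert d → ℝ≥0∞) : ℝ≥0∞ :=
  ⨆ x : Vert d, ∑' v : Vert d,
    conv (conv (conv q (phi μ)) q) (phi μ) v * conv q (phi μ) (v - x)

/-- The H-shaped diagram `H_p`. -/
noncomputable def Hdiag (μ : Measure (Config d)) (q : Vert d → ℝ≥0∞) : ℝ≥0∞ :=
  ⨆ x : Vert d, ⨆ y : Vert d, ∑' u : Vert d, ∑' v : Vert d, ∑' w : Vert d,
    conv q (phi μ) u * conv (conv (phi μ) q) (phi μ) (v - u) *
      conv q (phi μ) (v - x) * conv q (phi μ) (w - u) * conv q (phi μ) (y + w - v)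

/-! ### Expectations over finite product Bernoulli measures -/

section BK

open Classical in
/-- Indicator of a proposition, with values in `ℝ≥0∞`. -/
noncomputable def ind (P : Prop) : ℝ≥0∞ := if P then 1 else 0

lemma ind_mono {P Q : Prop} (h : P → Q) : ind P ≤ ind Q := by
  unfold ind
  by_cases hP : P
  · simp [hP, h hP]
  · simp [hP]

variable {α : Type*} [DecidableEq α]

/-- Expectation of `F S`, where `S` is the random subset of `Λ` that contains each `b ∈ Λ`
independently with probability `p b`. -/
noncomputable def bern (p : α → ℝ≥0∞) (Λ : Finset α) (F : Finset α → ℝ≥0∞) : ℝ≥0∞ :=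
  ∑ S ∈ Λ.powerset, (∏ b ∈ Λ, if b ∈ S then p b else 1 - p b) * F S

lemma bern_mono {p : α → ℝ≥0∞} {Λ : Finset α} {F G : Finset α → ℝ≥0∞}
    (h : ∀ S, F S ≤ G S) : bern p Λ F ≤ bern p Λ G :=
  Finset.sum_le_sum fun S _ => by gcongr; exact h S

lemma bern_add (p : α → ℝ≥0∞) (Λ : Finset α) (F G : Finset α → ℝ≥0∞) :
    bern p Λ (fun S => F S + G S) = bern p Λ F + bern p Λ G := by
  simp only [bern, mul_add, Finset.sum_add_distrib]

lemma bern_const_mul (p : α → ℝ≥0∞) (Λ : Finset α) (c : ℝ≥0∞) (F : Finset α → ℝ≥0∞) :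
    bern p Λ (fun S => c * F S) = c * bern p Λ F := by
  simp only [bern, Finset.mul_sum]
  exact Finset.sum_congr rfl fun S _ => by ring

lemma bern_insert (p : α → ℝ≥0∞) {Λ : Finset α} {e : α} (he : e ∉ Λ)
    (F : Finset α → ℝ≥0∞) :
    bern p (insert e Λ) F =
      (1 - p e) * bern p Λ F + p e * bern p Λ (fun S => F (insert e S)) := by
  unfold bern
  rw [Finset.sum_powerset_insert he, Finset.mul_sum, Finset.mul_sum]
  congr 1
  · refine Finset.sum_congr rfl fun S hS => ?_
    have heS : e ∉ S := fun h => he (Finset.mem_powerset.1 hS h)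
    rw [Finset.prod_insert he, if_neg heS, mul_assoc]
  · refine Finset.sum_congr rfl fun S hS => ?_
    rw [Finset.prod_insert he, if_pos (Finset.mem_insert_self e S), mul_assoc]
    congr 2
    refine Finset.prod_congr rfl fun b hb => ?_
    have hbe : b ≠ e := fun h => he (h ▸ hb)
    simp [Finset.mem_insert, hbe]

/-- The van den Berg–Kesten comparison for an increasing relation `D` between bond sets: having
disjoint subsets of one random set in relation `D` is at most as likely as having two independent
random sets in relation `D`. The induction replaces one bond at a time by two independent
copies. -/
lemma bk_fin (p : α → ℝ≥0∞) (hp : ∀ b, p b ≤ 1) (Λ : Finset α) :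
    ∀ D : Finset α → Finset α → Prop,
      (∀ {S S' U U'}, S ⊆ S' → U ⊆ U' → D S U → D S' U') →
      bern p Λ (fun S => ind (∃ S₁ S₂, Disjoint S₁ S₂ ∧ S₁ ⊆ S ∧ S₂ ⊆ S ∧ D S₁ S₂)) ≤
        bern p Λ fun S => bern p Λ fun U => ind (D S U) := by
  induction Λ using Finset.induction_on with
  | empty =>
    intro D hD
    simp only [bern, Finset.powerset_empty, Finset.sum_singleton, Finset.prod_empty, one_mul]
    refine ind_mono ?_
    rintro ⟨S₁, S₂, -, h1, h2, h⟩
    exact hD h1 h2 h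
  | insert e Λ he ih =>
    intro D hD
    set c := 1 - p e with hc
    have hcp : c + p e = 1 := tsub_add_cancel_of_le (hp e)
    let D' : Finset α → Finset α → Prop := fun S U => D (insert e S) U ∨ D S (insert e U)
    have h0 := ih D hD
    have h1 := ih D' (by
      rintro S S' U U' hS hU (h | h)
      · exact Or.inl (hD (Finset.insert_subset_insert e hS) hU h)
      · exact Or.inr (hD hS (Finset.insert_subset_insert e hU) h))
    -- The expectations over two independent copies, with `e` offered to neither, the first only,
    -- the second only, and both.
    set R0 := bern p Λ fun S => bern p Λ fun U => ind (D S U)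
    set RU := bern p Λ fun S => bern p Λ fun U => ind (D' S U)
    set RA := bern p Λ fun S => bern p Λ fun U => ind (D (insert e S) U) with hRA
    set RB := bern p Λ fun S => bern p Λ fun U => ind (D S (insert e U)) with hRB
    set RAB := bern p Λ fun S => bern p Λ fun U => ind (D (insert e S) (insert e U)) with hRAB
    have hsub : ∀ S : Finset α, S ⊆ insert e S := fun S => Finset.subset_insert e S
    have hUAB : RU ≤ RAB := bern_mono fun S => bern_mono fun U => ind_mono (by
      rintro (h | h)
      · exact hD subset_rfl (hsub _) h
      · exact hD (hsub _) subset_rfl h)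
    have hincl : RU + R0 ≤ RA + RB := by
      simp only [RU, R0, RA, RB]
      rw [← bern_add, ← bern_add]
      refine bern_mono fun S => ?_
      rw [← bern_add, ← bern_add]
      refine bern_mono fun U => ?_
      by_cases h : D S U
      · have hA : D (insert e S) U := hD (hsub _) subset_rfl h
        have hB : D S (insert e U) := hD subset_rfl (hsub _) h
        simp [D', ind, h, hA, hB]
      · by_cases hA : D (insert e S) U <;> by_cases hB : D S (insert e U) <;>
          simp [D', ind, h, hA, hB]
    have hL : bern p Λ (fun S => ind (∃ S₁ S₂, Disjoint S₁ S₂ ∧ S₁ ⊆ insert e S ∧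
        S₂ ⊆ insert e S ∧ D S₁ S₂)) ≤ RU := by
      refine le_trans (bern_mono fun S => ind_mono ?_) h1
      rintro ⟨S₁, S₂, hdis, hs1, hs2, h⟩
      refine ⟨S₁.erase e, S₂.erase e, ?_, ?_, ?_, ?_⟩
      · exact hdis.mono (Finset.erase_subset _ _) (Finset.erase_subset _ _)
      · exact Finset.subset_insert_iff.1 hs1
      · exact Finset.subset_insert_iff.1 hs2
      · by_cases he1 : e ∈ S₁
        · have he2 : e ∉ S₂ := Finset.disjoint_left.1 hdis he1
          left
          rw [Finset.insert_erase he1, Finset.erase_eq_of_notMem he2]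
          exact h
        · right
          rw [Finset.erase_eq_of_notMem he1]
          exact hD subset_rfl (Finset.subset_insert_iff.2 subset_rfl) h
    have hR : (bern p (insert e Λ) fun S => bern p (insert e Λ) fun U => ind (D S U)) =
        c * (c * R0 + p e * RB) + p e * (c * RA + p e * RAB) := by
      simp only [bern_insert p he, bern_add, bern_const_mul]
      rfl
    rw [hR, bern_insert p he]
    calc c * _ + p e * _ ≤ c * R0 + p e * RU := by gcongr
      _ = c * ((c + p e) * R0) + p e * ((c + p e) * RU) := by rw [hcp, one_mul, one_mul]
      _ = c * (c * R0) + p e * c * (RU + R0) + p e * (p e * RU) := by ring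
      _ ≤ c * (c * R0) + p e * c * (RA + RB) + p e * (p e * RAB) := by gcongr
      _ = _ := by ring

end BK

/-! ### Disjoint occurrence of families of bond sets -/

/-- A family of finite bond sets, regarded as the possible witnesses of an increasing event. -/
abbrev Fam (d : ℕ) := Set (Finset (Bond d))

/-- The event that some member of the family is fully occupied. -/
def occ (A : Fam d) : Set (Config d) := {ω | ∃ S ∈ A, ∀ b ∈ S, ω b = true}

/-- Unions of two disjoint witnesses. -/
def comp (A B : Fam d) : Fam d := {C | ∃ S ∈ A, ∃ U ∈ B, Disjoint S U ∧ C = S ∪ U}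

local infixr:70 " ⋄ " => comp

/-- The family with the single witness `{b}`. -/
def sg (b : Bond d) : Fam d := {{b}}

lemma measurableSet_cyl (s : Finset (Bond d)) (f : Bond d → Bool) :
    MeasurableSet {ω : Config d | ∀ b ∈ s, ω b = f b} := by
  have : {ω : Config d | ∀ b ∈ s, ω b = f b} = ⋂ b ∈ s, (fun ω : Config d => ω b) ⁻¹' {f b} := by
    ext ω; simp
  rw [this]
  exact Finset.measurableSet_biInter s fun b _ => measurable_pi_apply b (MeasurableSet.singleton _)

section Measure

variable {μ : Measure (Config d)} {q : Vert d → ℝ≥0∞}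

lemma measure_finite_event (hμ : IsBernoulliField μ (fun u v => q (v - u)))
    (Λ : Finset (Bond d)) (F : Finset (Bond d) → Prop) :
    μ {ω | F (Λ.filter fun b => ω b = true)} =
      bern (fun b : Bond d => q (b.2 - b.1)) Λ (fun S => ind (F S)) := by
  classical
  have hset : {ω : Config d | F (Λ.filter fun b => ω b = true)} =
      ⋃ S ∈ Λ.powerset.filter F, {ω | ∀ b ∈ Λ, ω b = decide (b ∈ S)} := by
    ext ω
    simp only [Set.mem_ofPred_eq, Set.mem_iUnion, exists_prop, Finset.mem_filter,
      Finset.mem_powerset]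
    constructor
    · intro h
      refine ⟨Λ.filter fun b => ω b = true, ⟨Finset.filter_subset _ _, h⟩, fun b hb => ?_⟩
      simp [hb]
    · rintro ⟨S, ⟨hS, hF⟩, h⟩
      have : (Λ.filter fun b => ω b = true) = S := by
        ext b
        simp only [Finset.mem_filter]
        constructor
        · rintro ⟨hb, hb'⟩
          have := h b hb
          rw [hb'] at this
          exact of_decide_eq_true this.symm
        · intro hb
          refine ⟨hS hb, ?_⟩
          rw [h b (hS hb)]
          simpa using hb
      rwa [this]
  rw [hset, measure_biUnion_finset]
  · rw [bern, Finset.sum_filter]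
    refine Finset.sum_congr rfl fun S _ => ?_
    rw [hμ.2.2.2 Λ (fun b => decide (b ∈ S))]
    by_cases hF : F S <;> simp [ind, hF]
  · intro S hS U hU hSU
    refine Set.disjoint_left.2 fun ω h1 h2 => hSU ?_
    simp only [Finset.coe_filter, Finset.mem_powerset, Set.mem_ofPred_eq] at hS hU h1 h2
    ext b
    constructor
    · intro hb
      have := (h1 b (hS.1 hb)).symm.trans (h2 b (hS.1 hb))
      simpa [hb] using this
    · intro hb
      have := (h1 b (hU.1 hb)).symm.trans (h2 b (hU.1 hb))
      simpa [hb] using this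
  · intro S _
    exact measurableSet_cyl Λ _

/-- The van den Berg–Kesten inequality for witness families. -/
lemma bk (hμ : IsBernoulliField μ (fun u v => q (v - u))) (A B : Fam d) :
    μ (occ (A ⋄ B)) ≤ μ (occ A) * μ (occ B) := by
  classical
  let p : Bond d → ℝ≥0∞ := fun b => q (b.2 - b.1)
  let X : Finset (Bond d) → Set (Config d) := fun Λ =>
    {ω | ∃ S ∈ A, ∃ U ∈ B, Disjoint S U ∧ S ⊆ Λ.filter (fun b => ω b = true) ∧
      U ⊆ Λ.filter (fun b => ω b = true)}
  have hX : occ (A ⋄ B) = ⋃ Λ, X Λ := by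
    ext ω
    simp only [occ, comp, X, Set.mem_ofPred_eq, Set.mem_iUnion]
    constructor
    · rintro ⟨_, ⟨S, hS, U, hU, hd, rfl⟩, h⟩
      refine ⟨S ∪ U, S, hS, U, hU, hd, fun b hb => ?_, fun b hb => ?_⟩
      · simp [hb, h b (Finset.mem_union_left _ hb)]
      · simp [hb, h b (Finset.mem_union_right _ hb)]
    · rintro ⟨Λ, S, hS, U, hU, hd, h1, h2⟩
      refine ⟨_, ⟨S, hS, U, hU, hd, rfl⟩, fun b hb => ?_⟩
      rcases Finset.mem_union.1 hb with hb | hb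
      · exact (Finset.mem_filter.1 (h1 hb)).2
      · exact (Finset.mem_filter.1 (h2 hb)).2
  have hdir : Directed (· ⊆ ·) X := by
    intro Λ Λ'
    refine ⟨Λ ∪ Λ', ?_, ?_⟩
    · rintro ω ⟨S, hS, U, hU, hd, h1, h2⟩
      exact ⟨S, hS, U, hU, hd,
        h1.trans (Finset.filter_subset_filter _ Finset.subset_union_left),
        h2.trans (Finset.filter_subset_filter _ Finset.subset_union_left)⟩
    · rintro ω ⟨S, hS, U, hU, hd, h1, h2⟩
      exact ⟨S, hS, U, hU, hd,
        h1.trans (Finset.filter_subset_filter _ Finset.subset_union_right),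
        h2.trans (Finset.filter_subset_filter _ Finset.subset_union_right)⟩
  rw [hX, hdir.measure_iUnion]
  refine iSup_le fun Λ => ?_
  let FA : Finset (Bond d) → Prop := fun S' => ∃ S ∈ A, S ⊆ S'
  let FB : Finset (Bond d) → Prop := fun S' => ∃ S ∈ B, S ⊆ S'
  have hocc : ∀ C : Fam d, {ω : Config d | ∃ S ∈ C, S ⊆ Λ.filter fun b => ω b = true} ⊆ occ C := by
    rintro C ω ⟨S, hS, h⟩
    exact ⟨S, hS, fun b hb => (Finset.mem_filter.1 (h hb)).2⟩
  calc μ (X Λ) = bern p Λ (fun S' => ind (∃ S ∈ A, ∃ U ∈ B, Disjoint S U ∧ S ⊆ S' ∧ U ⊆ S')) :=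
        measure_finite_event hμ Λ
          (fun S' => ∃ S ∈ A, ∃ U ∈ B, Disjoint S U ∧ S ⊆ S' ∧ U ⊆ S')
    _ ≤ bern p Λ (fun S => ind (∃ S₁ S₂, Disjoint S₁ S₂ ∧ S₁ ⊆ S ∧ S₂ ⊆ S ∧ (FA S₁ ∧ FB S₂))) := by
        refine bern_mono fun S' => ind_mono ?_
        rintro ⟨S, hS, U, hU, hd, h1, h2⟩
        exact ⟨S, U, hd, h1, h2, ⟨S, hS, subset_rfl⟩, ⟨U, hU, subset_rfl⟩⟩
    _ ≤ bern p Λ fun S => bern p Λ fun U => ind (FA S ∧ FB U) := by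
        refine bk_fin p (fun b => hμ.2.1 b.1 b.2) Λ (fun S U => FA S ∧ FB U) ?_
        rintro S S' U U' hS hU ⟨⟨V, hV, hVS⟩, ⟨W, hW, hWU⟩⟩
        exact ⟨⟨V, hV, hVS.trans hS⟩, ⟨W, hW, hWU.trans hU⟩⟩
    _ = bern p Λ (fun S => ind (FA S)) * bern p Λ (fun U => ind (FB U)) := by
        have : ∀ S U, ind (FA S ∧ FB U) = ind (FA S) * ind (FB U) := by
          intro S U
          by_cases h1 : FA S <;> by_cases h2 : FB U <;> simp [ind, h1, h2]
        simp only [this, bern_const_mul]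
        rw [mul_comm, ← bern_const_mul]
        simp only [mul_comm]
    _ ≤ μ (occ A) * μ (occ B) := by
        rw [← measure_finite_event hμ Λ FA, ← measure_finite_event hμ Λ FB]
        exact mul_le_mul' (measure_mono (hocc A)) (measure_mono (hocc B))

end Measure

/-! ### Paths -/

/-- `IsPath u S w`: `S` is the set of bonds of a path from `u` to `w` all of whose bonds point one
step forward in time. -/
inductive IsPath : Vert d → Finset (Bond d) → Vert d → Prop
  | nil (v : Vert d) : IsPath v ∅ v
  | cons {u v w : Vert d} {S : Finset (Bond d)} : v.2 = u.2 + 1 → IsPath v S w →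
      IsPath u (insert (u, v) S) w

/-- Vertices visited by a path from `u` with bond set `S`. -/
def verts (u : Vert d) (S : Finset (Bond d)) : Set (Vert d) := {z | z = u ∨ ∃ e ∈ S, e.2 = z}

/-- All bonds of `S` are occupied in `ω`. -/
def IsOpenOn (ω : Config d) (S : Finset (Bond d)) : Prop := ∀ b ∈ S, ω b = true

/-- Only bonds pointing one step forward in time are occupied. -/
def Good (ω : Config d) : Prop := ∀ b : Bond d, ω b = true → b.2.2 = b.1.2 + 1

lemma IsOpenOn.mono {ω : Config d} {S U : Finset (Bond d)} (h : IsOpenOn ω U) (hS : S ⊆ U) :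
    IsOpenOn ω S := fun b hb => h b (hS hb)

lemma IsOpenOn.union {ω : Config d} {S U : Finset (Bond d)} (h : IsOpenOn ω S)
    (h' : IsOpenOn ω U) : IsOpenOn ω (S ∪ U) := fun b hb =>
  (Finset.mem_union.1 hb).elim (h b) (h' b)

lemma isOpenOn_singleton {ω : Config d} {b : Bond d} (h : ω b = true) : IsOpenOn ω {b} :=
  fun _ he => Finset.mem_singleton.1 he ▸ h

lemma self_mem_verts (u : Vert d) (S : Finset (Bond d)) : u ∈ verts u S := Or.inl rfl

namespace IsPath

variable {u v w z : Vert d} {S U : Finset (Bond d)}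

lemma le (h : IsPath u S w) : u.2 ≤ w.2 := by
  induction h with
  | nil => exact le_rfl
  | cons h1 _ ih => omega

lemma bond (h : IsPath u S w) : ∀ e ∈ S, u.2 ≤ e.1.2 ∧ e.2.2 = e.1.2 + 1 ∧ e.2.2 ≤ w.2 := by
  induction h with
  | nil => simp
  | @cons u v w S h1 h2 ih =>
    intro e he
    rcases Finset.mem_insert.1 he with rfl | he
    · exact ⟨le_rfl, h1, h2.le⟩
    · have := ih e he
      exact ⟨by omega, this.2⟩

lemma eq_of_time (h : IsPath u S w) (ht : u.2 = w.2) : u = w := by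
  cases h with
  | nil => rfl
  | cons h1 h2 =>
    have := h2.le
    omega

lemma single (h : v.2 = u.2 + 1) : IsPath u {(u, v)} v := by
  have := IsPath.cons h (IsPath.nil v)
  simpa using this

lemma append (h : IsPath u S v) (h' : IsPath v U w) : IsPath u (S ∪ U) w := by
  induction h with
  | nil => simpa using h'
  | cons h1 _ ih =>
    rw [Finset.insert_union]
    exact IsPath.cons h1 (ih h')

/-- Bond sets separated in time are disjoint. -/
lemma _root_.disjoint_of_time {S U : Finset (Bond d)} (t : ℤ) (hS : ∀ e ∈ S, e.1.2 < t)
    (hU : ∀ e ∈ U, t ≤ e.1.2) : Disjoint S U :=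
  Finset.disjoint_left.2 fun e h1 h2 => absurd (hS e h1) (not_lt.2 (hU e h2))

lemma bot_lt (h : IsPath u S w) : ∀ e ∈ S, e.1.2 < w.2 := fun e he => by
  have := h.bond e he
  omega

lemma le_bot (h : IsPath u S w) : ∀ e ∈ S, u.2 ≤ e.1.2 := fun e he => (h.bond e he).1

lemma disjoint_append (h : IsPath u S v) (h' : IsPath v U w) : Disjoint S U :=
  disjoint_of_time v.2 h.bot_lt h'.le_bot

lemma bot_mem (h : IsPath u S w) : ∀ e ∈ S, e.1 ∈ verts u S := by
  induction h with
  | nil => simp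
  | @cons u v w S h1 h2 ih =>
    intro e he
    rcases Finset.mem_insert.1 he with rfl | he
    · exact Or.inl rfl
    · rcases ih e he with h | ⟨f, hf, h⟩
      · exact Or.inr ⟨(u, v), Finset.mem_insert_self _ _, h.symm⟩
      · exact Or.inr ⟨f, Finset.mem_insert_of_mem hf, h⟩

lemma end_mem (h : IsPath u S w) : w ∈ verts u S := by
  induction h with
  | nil => exact Or.inl rfl
  | @cons u v w S h1 h2 ih =>
    rcases ih with h | ⟨f, hf, h⟩
    · exact Or.inr ⟨(u, v), Finset.mem_insert_self _ _, h.symm⟩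
    · exact Or.inr ⟨f, Finset.mem_insert_of_mem hf, h⟩

lemma verts_le (h : IsPath u S w) : ∀ z ∈ verts u S, z.2 ≤ w.2 := by
  rintro z (rfl | ⟨e, he, rfl⟩)
  · exact h.le
  · exact (h.bond e he).2.2

lemma split_vert (h : IsPath u S w) (hz : z ∈ verts u S) :
    ∃ S₁ S₂, S = S₁ ∪ S₂ ∧ IsPath u S₁ z ∧ IsPath z S₂ w := by
  induction h with
  | nil v =>
    rcases hz with rfl | ⟨e, he, -⟩
    · exact ⟨∅, ∅, by simp, .nil _, .nil _⟩
    · simp at he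
  | @cons u v w S h1 h2 ih =>
    by_cases hzu : z = u
    · subst hzu
      exact ⟨∅, _, by simp, .nil _, .cons h1 h2⟩
    · have hz' : z ∈ verts v S := by
        rcases hz with h | ⟨e, he, h⟩
        · exact absurd h hzu
        · rcases Finset.mem_insert.1 he with rfl | he
          · exact Or.inl h.symm
          · exact Or.inr ⟨e, he, h⟩
      obtain ⟨S₁, S₂, rfl, h3, h4⟩ := ih hz'
      exact ⟨insert (u, v) S₁, S₂, by rw [Finset.insert_union], .cons h1 h3, h4⟩

lemma split_bond {e : Bond d} (h : IsPath u S w) (he : e ∈ S) :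
    ∃ S₁ S₂, S = S₁ ∪ ({e} ∪ S₂) ∧ IsPath u S₁ e.1 ∧ IsPath e.2 S₂ w := by
  induction h with
  | nil v => simp at he
  | @cons u v w S h1 h2 ih =>
    rcases Finset.mem_insert.1 he with rfl | he
    · exact ⟨∅, S, by ext; simp, .nil _, h2⟩
    · obtain ⟨S₁, S₂, rfl, h3, h4⟩ := ih he
      exact ⟨insert (u, v) S₁, S₂, by rw [Finset.insert_union], .cons h1 h3, h4⟩

/-- Initial segment of a path up to its first visit to `V`. -/
lemma first_hit {V : Set (Vert d)} (h : IsPath u S w) (hw : w ∈ V) :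
    ∃ z ∈ V, ∃ S₁ ⊆ S, IsPath u S₁ z ∧ ∀ e ∈ S₁, e.1 ∉ V := by
  induction h with
  | nil v => exact ⟨v, hw, ∅, subset_rfl, .nil _, by simp⟩
  | @cons u v w S h1 h2 ih =>
    by_cases hu : u ∈ V
    · exact ⟨u, hu, ∅, by simp, .nil _, by simp⟩
    · obtain ⟨z, hz, S₁, hS, h3, h4⟩ := ih hw
      refine ⟨z, hz, insert (u, v) S₁, Finset.insert_subset_insert _ hS, .cons h1 h3, ?_⟩
      intro e he
      rcases Finset.mem_insert.1 he with rfl | he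
      · exact hu
      · exact h4 e he

/-- Final segment of a path after its last visit to `V`. -/
lemma last_exit {V : Set (Vert d)} (h : IsPath u S w) (hu : u ∈ V) :
    ∃ z ∈ V, u.2 ≤ z.2 ∧ ∃ S₂ ⊆ S, IsPath z S₂ w ∧ ∀ e ∈ S₂, e.2 ∉ V := by
  have key : (∃ z ∈ V, u.2 ≤ z.2 ∧ ∃ S₂ ⊆ S, IsPath z S₂ w ∧ ∀ e ∈ S₂, e.2 ∉ V) ∨
      ∀ z ∈ verts u S, z ∉ V := by
    clear hu
    induction h with
    | nil v =>
      by_cases hv : v ∈ V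
      · exact Or.inl ⟨v, hv, le_rfl, ∅, subset_rfl, .nil _, by simp⟩
      · refine Or.inr ?_
        rintro z (rfl | ⟨e, he, -⟩)
        · exact hv
        · simp at he
    | @cons u v w S h1 h2 ih =>
      rcases ih with ⟨z, hz, hle, S₂, hS, h3, h4⟩ | hno
      · exact Or.inl ⟨z, hz, by omega, S₂, hS.trans (Finset.subset_insert _ _), h3, h4⟩
      · by_cases hu : u ∈ V
        · refine Or.inl ⟨u, hu, le_rfl, _, subset_rfl, .cons h1 h2, ?_⟩
          intro e he
          rcases Finset.mem_insert.1 he with rfl | he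
          · exact hno _ (Or.inl rfl)
          · exact hno _ (Or.inr ⟨e, he, rfl⟩)
        · refine Or.inr ?_
          rintro z (rfl | ⟨e, he, rfl⟩)
          · exact hu
          · rcases Finset.mem_insert.1 he with rfl | he
            · exact hno _ (Or.inl rfl)
            · exact hno _ (Or.inr ⟨e, he, rfl⟩)
  rcases key with h | h
  · exact h
  · exact absurd hu (h u (Or.inl rfl))

/-- Final segment of a path after the last of its bonds that lie in `F`. -/
lemma last_bond (F : Finset (Bond d)) (h : IsPath u S w) :
    Disjoint S F ∨ ∃ f ∈ S, f ∈ F ∧ ∃ S₂ ⊆ S, IsPath f.2 S₂ w ∧ Disjoint S₂ F := by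
  induction h with
  | nil v => exact Or.inl (Finset.disjoint_empty_left _)
  | @cons u v w S h1 h2 ih =>
    rcases ih with hd | ⟨f, hf, hfF, S₂, hS, h3, h4⟩
    · by_cases hF : (u, v) ∈ F
      · exact Or.inr ⟨(u, v), Finset.mem_insert_self _ _, hF, S, Finset.subset_insert _ _, h2, hd⟩
      · exact Or.inl (Finset.disjoint_insert_left.2 ⟨hF, hd⟩)
    · exact Or.inr ⟨f, Finset.mem_insert_of_mem hf, hfF, S₂,
        hS.trans (Finset.subset_insert _ _), h3, h4⟩

lemma conn {ω : Config d} (h : IsPath u S w) (ho : IsOpenOn ω S) : Conn ω u w := by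
  induction h with
  | nil v => exact .refl v
  | cons h1 h2 ih =>
    exact .step (ho _ (Finset.mem_insert_self _ _)) (ih (ho.mono (Finset.subset_insert _ _)))

lemma connAvoid {ω : Config d} {b : Bond d} (h : IsPath u S w) (ho : IsOpenOn ω S)
    (hb : b ∉ S) : ConnAvoid ω b u w := by
  induction h with
  | nil v => exact .refl v
  | cons h1 h2 ih =>
    refine .step (fun h => hb (h ▸ Finset.mem_insert_self _ _))
      (ho _ (Finset.mem_insert_self _ _)) (ih (ho.mono (Finset.subset_insert _ _)) ?_)
    exact fun h => hb (Finset.mem_insert_of_mem h)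

end IsPath

lemma Conn.exists_path {ω : Config d} (hω : Good ω) {u w : Vert d} (h : Conn ω u w) :
    ∃ S, IsPath u S w ∧ IsOpenOn ω S := by
  induction h with
  | refl v => exact ⟨∅, .nil v, by simp [IsOpenOn]⟩
  | @step u v w ho _ ih =>
    obtain ⟨S, hS, hoS⟩ := ih
    refine ⟨_, .cons (hω (u, v) ho) hS, fun b hb => ?_⟩
    rcases Finset.mem_insert.1 hb with rfl | hb
    · exact ho
    · exact hoS b hb

lemma ConnAvoid.exists_path {ω : Config d} (hω : Good ω) {b : Bond d} {u w : Vert d}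
    (h : ConnAvoid ω b u w) : ∃ S, IsPath u S w ∧ IsOpenOn ω S ∧ b ∉ S := by
  induction h with
  | refl v => exact ⟨∅, .nil v, by simp [IsOpenOn], by simp⟩
  | @step u v w hne ho _ ih =>
    obtain ⟨S, hS, hoS, hb⟩ := ih
    refine ⟨_, .cons (hω (u, v) ho) hS, fun b hb => ?_, ?_⟩
    · rcases Finset.mem_insert.1 hb with rfl | hb
      · exact ho
      · exact hoS b hb
    · intro h
      rcases Finset.mem_insert.1 h with h | h
      · exact hne h.symm
      · exact hb h

/-- Every occupied path uses each pivotal bond. -/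
lemma Pivotal.mem_path {ω : Config d} {e : Bond d} {v x : Vert d} (h : Pivotal ω e v x)
    {S : Finset (Bond d)} (hS : IsPath v S x) (ho : IsOpenOn ω S) : e ∈ S := by
  by_contra he
  refine h.2 (hS.conn fun b hb => ?_)
  have : b ≠ e := fun h => he (h ▸ hb)
  simp [flipBond, this, ho b hb]

/-- A bond which is not pivotal can be avoided. -/
lemma exists_path_avoiding {ω : Config d} (hω : Good ω) {e : Bond d} {v x : Vert d}
    (h : ¬ Pivotal ω e v x) (hc : Conn ω v x) :
    ∃ S, IsPath v S x ∧ IsOpenOn ω S ∧ e ∉ S := by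
  obtain ⟨S, hS, ho⟩ := hc.exists_path hω
  have h1 : Conn (flipBond ω e true) v x := hS.conn fun b hb => by
    by_cases hbe : b = e <;> simp [flipBond, hbe, ho b hb]
  have h2 : Conn (flipBond ω e false) v x := by
    by_contra h2
    exact h ⟨h1, h2⟩
  have hg : Good (flipBond ω e false) := fun b hb => by
    by_cases hbe : b = e
    · simp [flipBond, hbe] at hb
    · exact hω b (by simpa [flipBond, hbe] using hb)
  obtain ⟨U, hU, hoU⟩ := h2.exists_path hg
  refine ⟨U, hU, fun b hb => ?_, fun he => ?_⟩
  · have hb' := hoU b hb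
    by_cases hbe : b = e
    · simp [flipBond, hbe] at hb'
    · simpa [flipBond, hbe] using hb'
  · simpa [flipBond] using hoU e he

/-! ### Disjoint paths from the lace-expansion event -/

/-- Suppose `y → z` off `b`, followed by two disjoint paths `z → x` off `b`, and suppose that no
bond with bottom endpoint in `C̃^b(y)` is needed for `{b̄ → x}`. Then there are disjoint paths
`b̄ → x` and `y → x`, the latter off `b`. The induction is on the time of `z`: a path
`b̄ → x` avoiding the last bond of `y → z` either avoids all of `y → z`, in which case it is
joined to one of the two strands where it first meets them, or it leaves `y → z` at an earlier
vertex from which there are again two disjoint paths to `x`. -/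
lemma switch_aux {ω : Config d} {b : Bond d} {x y : Vert d} (hb : b.2.2 = b.1.2 + 1)
    (hC : Conn ω b.2 x) (hω : Good ω)
    (hpiv : ∀ e : Bond d, e.1 ∈ tilC ω b y → ∃ δ, IsPath b.2 δ x ∧ IsOpenOn ω δ ∧ e ∉ δ) :
    ∀ (n : ℕ) (z : Vert d) (γ α β : Finset (Bond d)), (z.2 - y.2).toNat < n →
      IsPath y γ z → IsPath z α x → IsPath z β x → Disjoint α β →
      IsOpenOn ω γ → IsOpenOn ω α → IsOpenOn ω β → b ∉ γ → b ∉ α → b ∉ β →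
      ∃ A G, IsPath b.2 A x ∧ IsPath y G x ∧ Disjoint A G ∧ IsOpenOn ω A ∧ IsOpenOn ω G ∧
        b ∉ G := by
  intro n
  induction n with
  | zero => intro z γ α β h; omega
  | succ n ih =>
    intro z γ α₀ β₀ hn hγ hα₀ hβ₀ hαβ₀ oγ oα₀ oβ₀ bγ bα₀ bβ₀
    obtain ⟨δ, hδ, oδ, hδγ⟩ : ∃ δ, IsPath b.2 δ x ∧ IsOpenOn ω δ ∧
        ∀ f ∈ γ, f.2 = z → f ∉ δ := by
      by_cases h : ∃ e ∈ γ, e.2 = z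
      · obtain ⟨e, he, hez⟩ := h
        obtain ⟨γ₁, γ₂, rfl, h1, h2⟩ := hγ.split_bond he
        obtain ⟨δ, hδ, oδ, heδ⟩ := hpiv e (h1.connAvoid (oγ.mono Finset.subset_union_left)
          fun h => bγ (Finset.mem_union_left _ h))
        refine ⟨δ, hδ, oδ, fun f hf hfz => ?_⟩
        -- `e` is the only bond of `y → z` that ends at `z`.
        have : f = e := by
          rcases Finset.mem_union.1 hf with hf | hf
          · have h3 := h1.bond f hf
            have h4 := (hγ.bond e he).2.1
            rw [hez] at h4
            rw [hfz] at h3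
            omega
          · rcases Finset.mem_union.1 hf with hf | hf
            · exact Finset.mem_singleton.1 hf
            · have h3 := h2.bond f hf
              rw [hez, hfz] at h3
              omega
        rwa [this]
      · push Not at h
        obtain ⟨δ, hδ, oδ⟩ := hC.exists_path hω
        exact ⟨δ, hδ, oδ, fun f hf hfz => absurd hfz (h f hf)⟩
    obtain ⟨h, hhV, δ₁, hδ₁δ, hδ₁, hδ₁V⟩ :=
      hδ.first_hit (V := verts z α₀ ∪ verts z β₀) (Or.inl hα₀.end_mem)
    have bδ : b ∉ δ₁ := fun hbδ => by
      have := hδ₁.le_bot b hbδ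
      omega
    -- `α` denotes the strand which is met first.
    have key : ∀ α β : Finset (Bond d), IsPath z α x → IsPath z β x → Disjoint α β →
        IsOpenOn ω α → IsOpenOn ω β → b ∉ α → b ∉ β → h ∈ verts z α →
        (∀ e ∈ δ₁, e.1 ∉ verts z β) →
        ∃ A G, IsPath b.2 A x ∧ IsPath y G x ∧ Disjoint A G ∧ IsOpenOn ω A ∧ IsOpenOn ω G ∧
          b ∉ G := by
      intro α β hα hβ hαβ oα oβ bα bβ hhα hδβ
      obtain ⟨α₁, α₂, rfl, hα₁, hα₂⟩ := hα.split_vert hhα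
      have oα₂ : IsOpenOn ω α₂ := oα.mono Finset.subset_union_right
      have bα₂ : b ∉ α₂ := fun h => bα (Finset.mem_union_right _ h)
      have dδβ : Disjoint δ₁ β :=
        Finset.disjoint_left.2 fun e h1 h2 => hδβ e h1 (hβ.bot_mem e h2)
      have dαβ : Disjoint α₂ β := hαβ.mono_left Finset.subset_union_right
      have dγα : Disjoint γ α₂ := disjoint_of_time z.2 hγ.bot_lt fun e he =>
        hα₁.le.trans (hα₂.le_bot e he)
      rcases hδ₁.last_bond γ with hd | ⟨f, hfδ, hfγ, δ₂, hδ₂, hpδ₂, hdδ₂⟩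
      · refine ⟨δ₁ ∪ α₂, γ ∪ β, hδ₁.append hα₂, hγ.append hβ, ?_,
          (oδ.mono hδ₁δ).union oα₂, oγ.union oβ, ?_⟩
        · rw [Finset.disjoint_union_left, Finset.disjoint_union_right,
            Finset.disjoint_union_right]
          exact ⟨⟨hd, dδβ⟩, dγα.symm, dαβ⟩
        · simp [bγ, bβ]
      · obtain ⟨γ₁, γ₂, hγe, hγ₁, hγ₂⟩ := hγ.split_bond hfγ
        have hs1 : γ₁ ⊆ γ := hγe ▸ Finset.subset_union_left
        have hs2 : γ₂ ⊆ γ := hγe ▸ (Finset.subset_union_right.trans Finset.subset_union_right)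
        have hft := hγ.bond f hfγ
        have hfz : f.2 ≠ z := fun h => hδγ f hfγ h (hδ₁δ hfδ)
        have hlt : f.2.2 < z.2 := lt_of_le_of_ne hft.2.2 fun h => hfz (hγ₂.eq_of_time h)
        have oδ₂ : IsOpenOn ω δ₂ := oδ.mono (hδ₂.trans hδ₁δ)
        refine ih f.2 (γ₁ ∪ {f}) (δ₂ ∪ α₂) (γ₂ ∪ β) (by omega)
          (hγ₁.append (IsPath.single hft.2.1)) (hpδ₂.append hα₂) (hγ₂.append hβ) ?_
          ((oγ.mono hs1).union (isOpenOn_singleton (oγ f hfγ)))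
          (oδ₂.union oα₂) ((oγ.mono hs2).union oβ) ?_ ?_ ?_
        · rw [Finset.disjoint_union_left, Finset.disjoint_union_right,
            Finset.disjoint_union_right]
          exact ⟨⟨hdδ₂.mono_right hs2, dδβ.mono_left hδ₂⟩, (dγα.mono_left hs2).symm, dαβ⟩
        · intro h
          rcases Finset.mem_union.1 h with h | h
          · exact bγ (hs1 h)
          · exact bγ (Finset.mem_singleton.1 h ▸ hfγ)
        · intro h
          rcases Finset.mem_union.1 h with h | h
          · exact bδ (hδ₂ h)
          · exact bα₂ h
        · intro h
          rcases Finset.mem_union.1 h with h | h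
          · exact bγ (hs2 h)
          · exact bβ h
    rcases hhV with hh | hh
    · exact key α₀ β₀ hα₀ hβ₀ hαβ₀ oα₀ oβ₀ bα₀ bβ₀ hh fun e he h' => hδ₁V e he (Or.inr h')
    · exact key β₀ α₀ hβ₀ hα₀ hαβ₀.symm oβ₀ oα₀ bβ₀ bα₀ hh fun e he h' => hδ₁V e he (Or.inl h')

/-- On the event `E(b, x; C̃^b(y))` there are bond-disjoint occupied paths `b̄ → x` and
`y → x`, the latter avoiding `b`. -/
lemma Eevent.exists_paths {ω : Config d} (hω : Good ω) {b : Bond d} {x y : Vert d}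
    (h : ω ∈ Eevent b x y) :
    ∃ A G, IsPath b.2 A x ∧ IsPath y G x ∧ Disjoint A G ∧ IsOpenOn ω A ∧ IsOpenOn ω G ∧
      b ∉ G := by
  obtain ⟨hb, hC, hx, hpiv⟩ := h
  obtain ⟨γ, hγ, oγ, bγ⟩ := ConnAvoid.exists_path hω hx
  refine switch_aux (hω b hb) hC hω (fun e he => ?_) _ x γ ∅ ∅ (Nat.lt_succ_self _) hγ (.nil x)
    (.nil x) (Finset.disjoint_empty_left _) oγ (by simp [IsOpenOn]) (by simp [IsOpenOn]) bγ
    (by simp) (by simp)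
  exact exists_path_avoiding hω (fun hp => hpiv e hp he) hC

/-- Two bond-disjoint occupied paths from a double connection. -/
lemma DoubleConn.exists_paths {ω : Config d} (hω : Good ω) {u v : Vert d}
    (h : ω ∈ DoubleConn u v) :
    ∃ A B, IsPath u A v ∧ IsPath u B v ∧ Disjoint A B ∧ IsOpenOn ω A ∧ IsOpenOn ω B := by
  classical
  obtain ⟨B₁, B₂, hd, h1, h2⟩ := h
  have key : ∀ B : Set (Bond d), OccursOn (connEvent u v) B ω →
      ∃ S, IsPath u S v ∧ IsOpenOn ω S ∧ ∀ b ∈ S, b ∈ B := by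
    intro B hB
    let ω' : Config d := fun b => if b ∈ B then ω b else false
    have hω' : ∀ b, ω' b = true → ω b = true ∧ b ∈ B := by
      intro b hb
      by_cases hbB : b ∈ B
      · exact ⟨by simpa [ω', hbB] using hb, hbB⟩
      · simp [ω', hbB] at hb
    have hc : Conn ω' u v := hB ω' fun b hb => by simp [ω', hb]
    obtain ⟨S, hS, oS⟩ := hc.exists_path fun b hb => hω b (hω' b hb).1
    exact ⟨S, hS, fun b hb => (hω' b (oS b hb)).1, fun b hb => (hω' b (oS b hb)).2⟩
  obtain ⟨S, hS, oS, sS⟩ := key B₁ h1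
  obtain ⟨U, hU, oU, sU⟩ := key B₂ h2
  exact ⟨S, U, hS, hU, Finset.disjoint_left.2 fun b hb hb' =>
    Set.disjoint_left.1 hd (sS b hb) (sU b hb'), oS, oU⟩

/-! ### Ladder diagrams -/

/-- Paths from `u` to `v`. -/
def Pa (u v : Vert d) : Fam d := {S | IsPath u S v}

/-- Paths from `u` to `v` with at least one bond. -/
def CP (u v : Vert d) : Fam d := {S | IsPath u S v ∧ u ≠ v}

/-- Paths from `a` to `c`, through the bond `e` if `m = some e`. -/
def St (m : Option (Bond d)) (a c : Vert d) : Fam d :=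
  match m with
  | none => Pa a c
  | some e => Pa a e.1 ⋄ sg e ⋄ Pa e.2 c

/-- Paths from `a` to `c` through the vertex `u`, and through the bond `e` if `m = some e`;
then `e` comes before or after `u`. -/
def Sp (m : Option (Bond d)) (a u c : Vert d) : Fam d :=
  match m with
  | none => Pa a u ⋄ Pa u c
  | some e => (Pa a e.1 ⋄ sg e ⋄ Pa e.2 u ⋄ Pa u c) ∪ (Pa a u ⋄ Pa u e.1 ⋄ sg e ⋄ Pa e.2 c)

/-- One rung of a ladder diagram: a path through `b` to `v'`, with the marked bond of `m`, and a
side line `u → v'`, together with a vertex `u'` on one of these two lines. -/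
def Rg (m : Option (Bond d)) (u : Vert d) (b : Bond d) (u' v' : Vert d) : Fam d :=
  (sg b ⋄ Sp m b.2 u' v' ⋄ CP u v') ∪ (sg b ⋄ St m b.2 v' ⋄ CP u u' ⋄ Pa u' v')

/-- Witnesses for the ladder diagram with successive pivotal bonds `b, bb 0, …, bb (n - 1)` and top
vertex `x`, whose first side line starts at `u`. The lines of a rung end at the bottom endpoint of
the next bond, or at `x`; the side line of the next rung starts from a vertex `u'` of either line.
The `i`-th rung carries the marked bond `e` on its line through the pivotal bond if
`m i = some e`. -/
def Lad : (n : ℕ) → (m : ℕ → Option (Bond d)) → (u : Vert d) → (b : Bond d) →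
    (bb : Fin n → Bond d) → (x : Vert d) → Fam d
  | 0, m, u, b, _, x => sg b ⋄ St (m 0) b.2 x ⋄ CP u x
  | n + 1, m, u, b, bb, x => ⋃ u',
      Rg (m 0) u b u' (bb 0).1 ⋄ Lad n (fun i => m (i + 1)) u' (bb 0) (Fin.tail bb) x

/-- The rungs of the lace-expansion event: `E(b, ·; C̃^b(y))` and its successors, with the marked
bonds of `m` pivotal. -/
def Chain (ω : Config d) : (n : ℕ) → (m : ℕ → Option (Bond d)) → (y : Vert d) → (b : Bond d) →
    (bb : Fin n → Bond d) → (x : Vert d) → Prop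
  | 0, m, y, b, _, x => ω ∈ Eevent b x y ∧ ∀ e, m 0 = some e → Pivotal ω e b.2 x
  | n + 1, m, y, b, bb, x =>
      (ω ∈ Eevent b (bb 0).1 y ∧ ∀ e, m 0 = some e → Pivotal ω e b.2 (bb 0).1) ∧
      Chain ω n (fun i => m (i + 1)) b.2 (bb 0) (Fin.tail bb) x

lemma mem_comp {A B : Fam d} {S U : Finset (Bond d)} (hS : S ∈ A) (hU : U ∈ B)
    (h : Disjoint S U) : S ∪ U ∈ A ⋄ B := ⟨S, hS, U, hU, h, rfl⟩

lemma mem_sg (b : Bond d) : ({b} : Finset (Bond d)) ∈ sg b := rfl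

/-- A path through the bond `e`, split there. -/
lemma mem_split_bond {a c : Vert d} {S : Finset (Bond d)} (h : IsPath a S c) {e : Bond d}
    (he : e ∈ S) : S ∈ Pa a e.1 ⋄ sg e ⋄ Pa e.2 c := by
  obtain ⟨S₁, S₂, rfl, h1, h2⟩ := h.split_bond he
  have h3 := (h.bond e he).2.1
  have h4 : IsPath e.1 {e} e.2 := IsPath.single h3
  exact mem_comp h1 (mem_comp (mem_sg e) h2 (h4.disjoint_append h2))
    (h1.disjoint_append (h4.append h2))

lemma mem_St {m : Option (Bond d)} {a c : Vert d} {S : Finset (Bond d)} (h : IsPath a S c)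
    (hm : ∀ e, m = some e → e ∈ S) : S ∈ St m a c := by
  cases m with
  | none => exact h
  | some e => exact mem_split_bond h (hm e rfl)

lemma comp_assoc (A B C : Fam d) : (A ⋄ B) ⋄ C = A ⋄ B ⋄ C := by
  ext S
  constructor
  · rintro ⟨_, ⟨S, hS, U, hU, hd, rfl⟩, W, hW, hd', rfl⟩
    rw [Finset.disjoint_union_left] at hd'
    refine ⟨S, hS, U ∪ W, mem_comp hU hW hd'.2, ?_, Finset.union_assoc _ _ _⟩
    exact Finset.disjoint_union_right.2 ⟨hd, hd'.1⟩
  · rintro ⟨S, hS, _, ⟨U, hU, W, hW, hd, rfl⟩, hd', rfl⟩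
    rw [Finset.disjoint_union_right] at hd'
    refine ⟨S ∪ U, mem_comp hS hU hd'.1, W, hW, ?_, (Finset.union_assoc _ _ _).symm⟩
    exact Finset.disjoint_union_left.2 ⟨hd'.2, hd⟩

lemma mem_Sp {m : Option (Bond d)} {a u c : Vert d} {S : Finset (Bond d)} (h : IsPath a S c)
    (hm : ∀ e, m = some e → e ∈ S) (hu : u ∈ verts a S) : S ∈ Sp m a u c := by
  obtain ⟨S₁, S₂, rfl, h1, h2⟩ := h.split_vert hu
  have hd := h1.disjoint_append h2
  cases m with
  | none => exact mem_comp h1 h2 hd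
  | some e =>
    rcases Finset.mem_union.1 (hm e rfl) with he | he
    · left
      have := mem_comp (mem_split_bond h1 he) (show S₂ ∈ Pa u c from h2) hd
      simpa only [comp_assoc] using this
    · right
      exact mem_comp (show S₁ ∈ Pa a u from h1) (mem_split_bond h2 he) hd

/-- From a chain of lace-expansion events to a ladder diagram. Here `V` and `F` are the vertices
and bonds of the part of the diagram constructed so far which `y` belongs to; the side line leaves
it at the vertex `u`. -/
lemma Chain.exists_ladder {ω : Config d} (hω : Good ω) :
    ∀ (n : ℕ) (m : ℕ → Option (Bond d)) (y : Vert d) (b : Bond d) (bb : Fin n → Bond d)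
      (x : Vert d), Chain ω n m y b bb x →
      ∀ (V : Set (Vert d)) (F : Finset (Bond d)), y ∈ V → (∀ z ∈ V, z.2 ≤ b.1.2) →
        (∀ e ∈ F, e.2 ∈ V ∧ e.1.2 < b.1.2) →
        ∃ u ∈ V, y.2 ≤ u.2 ∧ ∃ W ∈ Lad n m u b bb x, IsOpenOn ω W ∧ Disjoint F W ∧
          ∀ e ∈ W, y.2 ≤ e.1.2 := by
  -- One rung: the two lines from `b` and from `u` to the next vertex `x`.
  have rung : ∀ (m : Option (Bond d)) (y : Vert d) (b : Bond d) (x : Vert d),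
      ω ∈ Eevent b x y → (∀ e, m = some e → Pivotal ω e b.2 x) →
      ∀ (V : Set (Vert d)) (F : Finset (Bond d)), y ∈ V → (∀ z ∈ V, z.2 ≤ b.1.2) →
        (∀ e ∈ F, e.2 ∈ V ∧ e.1.2 < b.1.2) →
        ∃ u ∈ V, y.2 ≤ u.2 ∧ ∃ A G, IsPath b.2 A x ∧ IsPath u G x ∧ (∀ e, m = some e → e ∈ A) ∧
          IsOpenOn ω A ∧ IsOpenOn ω G ∧ Disjoint A G ∧ b ∉ A ∧ b ∉ G ∧ b ∉ F ∧ Disjoint F A ∧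
          Disjoint F G := by
    intro m y b x hE hm V F hy hV hF
    have hb := hω b hE.1
    obtain ⟨A, G, hA, hG, hd, oA, oG, bG⟩ := Eevent.exists_paths hω hE
    obtain ⟨u, huV, hyu, G₂, hG₂, hpG₂, hG₂V⟩ := hG.last_exit hy
    refine ⟨u, huV, hyu, A, G₂, hA, hpG₂, fun e he => (hm e he).mem_path hA oA, oA, oG.mono hG₂,
      hd.mono_right hG₂, fun h => ?_, fun h => bG (hG₂ h), fun h => ?_, ?_, ?_⟩
    · have := hA.le_bot b h
      omega
    · exact absurd (hF b h).2 (lt_irrefl _)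
    · refine disjoint_of_time b.1.2 (fun e he => (hF e he).2) fun e he => ?_
      have := hA.le_bot e he
      omega
    · exact Finset.disjoint_left.2 fun e h1 h2 => hG₂V e h2 (hF e h1).1
  intro n
  induction n with
  | zero =>
    intro m y b bb x hch V F hy hV hF
    obtain ⟨hE, hm⟩ := hch
    have hb := hω b hE.1
    obtain ⟨u, huV, hyu, A, G, hA, hG, hmA, oA, oG, hAG, bA, bG, bF, hFA, hFG⟩ :=
      rung (m 0) y b x hE hm V F hy hV hF
    have hux : u ≠ x := fun h => by
      have := hV u huV
      have := hA.le
      rw [h] at *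
      omega
    have hyb := hV y hy
    refine ⟨u, huV, hyu, {b} ∪ (A ∪ G), mem_comp (mem_sg b) (mem_comp (mem_St hA hmA)
      (show G ∈ CP u x from ⟨hG, hux⟩) hAG) ?_, (isOpenOn_singleton hE.1).union (oA.union oG),
      ?_, ?_⟩
    · simp [bA, bG]
    · simp [Finset.disjoint_union_right, bF, hFA, hFG]
    · intro e he
      rcases Finset.mem_union.1 he with he | he
      · rwa [Finset.mem_singleton.1 he]
      · rcases Finset.mem_union.1 he with he | he
        · have := hA.le_bot e he
          omega
        · exact hyu.trans (hG.le_bot e he)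
  | succ n ih =>
    intro m y b bb x hch V F hy hV hF
    obtain ⟨⟨hE, hm⟩, hch'⟩ := hch
    have hb := hω b hE.1
    obtain ⟨u, huV, hyu, A, G, hA, hG, hmA, oA, oG, hAG, bA, bG, bF, hFA, hFG⟩ :=
      rung (m 0) y b (bb 0).1 hE hm V F hy hV hF
    have huv : u ≠ (bb 0).1 := fun h => by
      have := hV u huV
      have := hA.le
      rw [h] at *
      omega
    have hyb := hV y hy
    obtain ⟨u', hu'V, hu't, W, hW, oW, hdW, hWt⟩ := ih (fun i => m (i + 1)) b.2 (bb 0)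
      (Fin.tail bb) x hch' (verts b.2 A ∪ verts u G) (A ∪ G) (Or.inl (self_mem_verts _ _))
      (by
        rintro z (hz | hz)
        · exact hA.verts_le z hz
        · exact hG.verts_le z hz)
      (by
        intro e he
        rcases Finset.mem_union.1 he with he | he
        · exact ⟨Or.inl (Or.inr ⟨e, he, rfl⟩), hA.bot_lt e he⟩
        · exact ⟨Or.inr (Or.inr ⟨e, he, rfl⟩), hG.bot_lt e he⟩)
    have hFW : Disjoint F W := disjoint_of_time b.1.2 (fun e he => (hF e he).2) fun e he => by
      have := hWt e he
      omega
    have hbW : b ∉ W := fun h => by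
      have := hWt b h
      omega
    have hdis : Disjoint ({b} ∪ (A ∪ G)) W := by
      rw [Finset.disjoint_union_left]
      exact ⟨Finset.disjoint_singleton_left.2 hbW, hdW⟩
    have hbAG : Disjoint {b} (A ∪ G) := by simp [bA, bG]
    refine ⟨u, huV, hyu, ({b} ∪ (A ∪ G)) ∪ W, ?_,
      ((isOpenOn_singleton hE.1).union (oA.union oG)).union oW, ?_, ?_⟩
    · refine Set.mem_iUnion.2 ⟨u', mem_comp ?_ hW hdis⟩
      rcases hu'V with h | h
      · left
        exact mem_comp (mem_sg b) (mem_comp (mem_Sp hA hmA h)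
          (show G ∈ CP u (bb 0).1 from ⟨hG, huv⟩) hAG) hbAG
      · right
        obtain ⟨G₁, G₂, rfl, hG₁, hG₂⟩ := hG.split_vert h
        have huu : u ≠ u' := fun h => by
          have := hV u huV
          rw [h] at *
          omega
        exact mem_comp (mem_sg b) (mem_comp (mem_St hA hmA)
          (mem_comp (show G₁ ∈ CP u u' from ⟨hG₁, huu⟩) (show G₂ ∈ Pa u' (bb 0).1 from hG₂)
            (hG₁.disjoint_append hG₂)) hAG) hbAG
    · simp [Finset.disjoint_union_right, bF, hFA, hFG, hFW]
    · intro e he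
      rcases Finset.mem_union.1 he with he | he
      · rcases Finset.mem_union.1 he with he | he
        · rwa [Finset.mem_singleton.1 he]
        · rcases Finset.mem_union.1 he with he | he
          · have := hA.le_bot e he
            omega
          · exact hyu.trans (hG.le_bot e he)
      · have := hWt e he
        omega

/-- Ladder diagrams closed off at the origin by the double connection `0 ⇒ b̲`. -/
def FullLad (n : ℕ) (m : ℕ → Option (Bond d)) (b : Bond d) (bb : Fin n → Bond d) (x : Vert d) :
    Fam d :=
  ⋃ u, (Pa 0 u ⋄ Pa u b.1 ⋄ Pa 0 b.1) ⋄ Lad n m u b bb x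

lemma Chain.mem_occ {ω : Config d} (hω : Good ω) {n : ℕ} {m : ℕ → Option (Bond d)} {b : Bond d}
    {bb : Fin n → Bond d} {x : Vert d} (hD : ω ∈ DoubleConn 0 b.1) (h : Chain ω n m 0 b bb x) :
    ω ∈ occ (FullLad n m b bb x) := by
  obtain ⟨A, B, hA, hB, hAB, oA, oB⟩ := DoubleConn.exists_paths hω hD
  obtain ⟨u, huV, -, W, hW, oW, hdW, -⟩ := h.exists_ladder hω n m 0 b bb x
    (verts 0 A ∪ verts 0 B) (A ∪ B) (Or.inl (self_mem_verts _ _))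
    (by
      rintro z (hz | hz)
      · exact hA.verts_le z hz
      · exact hB.verts_le z hz)
    (by
      intro e he
      rcases Finset.mem_union.1 he with he | he
      · exact ⟨Or.inl (Or.inr ⟨e, he, rfl⟩), hA.bot_lt e he⟩
      · exact ⟨Or.inr (Or.inr ⟨e, he, rfl⟩), hB.bot_lt e he⟩)
  -- The two strands play symmetric roles; `P` is the one that contains `u`.
  have key : ∀ P Q, IsPath 0 P b.1 → IsPath 0 Q b.1 → Disjoint P Q → u ∈ verts 0 P →
      P ∪ Q ∈ Pa 0 u ⋄ Pa u b.1 ⋄ Pa 0 b.1 := by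
    intro P Q hP hQ hPQ hu
    obtain ⟨P₁, P₂, rfl, h1, h2⟩ := hP.split_vert hu
    rw [← comp_assoc]
    exact mem_comp (mem_comp (show P₁ ∈ Pa 0 u from h1) (show P₂ ∈ Pa u b.1 from h2)
      (h1.disjoint_append h2)) hQ hPQ
  refine ⟨(A ∪ B) ∪ W, Set.mem_iUnion.2 ⟨u, mem_comp ?_ hW hdW⟩, (oA.union oB).union oW⟩
  rcases huV with hu | hu
  · exact key A B hA hB hAB hu
  · rw [Finset.union_comm]
    exact key B A hB hA hAB.symm hu

lemma chain_of_forall {ω : Config d} {x : Vert d} :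
    ∀ (n : ℕ) (m : ℕ → Option (Bond d)) (y : Vert d) (bb : Fin (n + 1) → Bond d),
      (∀ i : Fin (n + 1), ω ∈ Eevent (bb i)
        (if h : i.1 + 1 < n + 1 then (bb ⟨i.1 + 1, h⟩).1 else x)
        (if h : 0 < i.1 then
          (bb ⟨i.1 - 1, lt_of_le_of_lt (Nat.sub_le _ _) i.isLt⟩).2 else y)) →
      (∀ i : Fin (n + 1), ∀ e, m i.1 = some e → Pivotal ω e (bb i).2
        (if h : i.1 + 1 < n + 1 then (bb ⟨i.1 + 1, h⟩).1 else x)) →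
      Chain ω n m y (bb 0) (Fin.tail bb) x := by
  intro n
  induction n with
  | zero =>
    intro m y bb h hm
    exact ⟨by simpa using h 0, fun e he => by simpa using hm 0 e he⟩
  | succ n ih =>
    intro m y bb h hm
    refine ⟨⟨by simpa [Fin.tail] using h 0, fun e he => by simpa [Fin.tail] using hm 0 e he⟩, ?_⟩
    refine ih (fun i => m (i + 1)) (bb 0).2 (Fin.tail bb) (fun i => ?_) (fun i e he => ?_)
    · have := h i.succ
      obtain ⟨i, hi⟩ := i
      cases i with
      | zero => simpa [Fin.tail] using this
      | succ k => simpa [Fin.tail] using this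
    · have := hm i.succ e (by simpa using he)
      simpa [Fin.tail] using this

/-! ### Diagram weights -/

section Weights

variable {μ : Measure (Config d)} {q : Vert d → ℝ≥0∞}

lemma occ_mono {A B : Fam d} (h : A ⊆ B) : occ A ⊆ occ B := fun _ ⟨S, hS, hω⟩ => ⟨S, h hS, hω⟩

lemma measure_occ_union (A B : Fam d) : μ (occ (A ∪ B)) ≤ μ (occ A) + μ (occ B) := by
  refine le_trans (measure_mono ?_) (measure_union_le _ _)
  rintro ω ⟨S, hS | hS, hω⟩
  · exact Or.inl ⟨S, hS, hω⟩
  · exact Or.inr ⟨S, hS, hω⟩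

lemma measure_occ_iUnion (A : Vert d → Fam d) :
    μ (occ (⋃ u, A u)) ≤ ∑' u, μ (occ (A u)) := by
  refine le_trans (measure_mono ?_) (measure_iUnion_le _)
  rintro ω ⟨S, hS, hω⟩
  obtain ⟨u, hu⟩ := Set.mem_iUnion.1 hS
  exact Set.mem_iUnion.2 ⟨u, S, hu, hω⟩

lemma measure_occ_sg (hμ : IsBernoulliField μ (fun u v => q (v - u))) (b : Bond d) :
    μ (occ (sg b)) ≤ q (b.2 - b.1) := by
  have h := hμ.2.2.2 {b} (fun _ => true)
  simp only [Finset.mem_singleton, forall_eq, Finset.prod_singleton, if_true] at h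
  rw [← h]
  refine measure_mono ?_
  rintro ω ⟨S, rfl, hω⟩
  exact hω b (Finset.mem_singleton_self b)

lemma good_ae (hμ : IsBernoulliField μ (fun u v => q (v - u))) : ∀ᵐ ω ∂μ, Good ω := by
  unfold Good
  rw [ae_all_iff]
  intro b
  by_cases hb : b.2.2 = b.1.2 + 1
  · exact Filter.Eventually.of_forall fun _ _ => hb
  · have h0 : μ (occ (sg b)) = 0 :=
      le_antisymm ((measure_occ_sg hμ b).trans (hμ.2.2.1 b.1 b.2 hb).le) bot_le
    rw [ae_iff]
    refine measure_mono_null ?_ h0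
    intro ω hω
    refine ⟨{b}, rfl, fun e he => ?_⟩
    have : ω b = true := by
      by_contra h
      exact hω fun h' => absurd h' h
    rwa [Finset.mem_singleton.1 he]

/-- The marking that puts the bond `e` on the `j`-th rung only. -/
def mk (j : ℕ) (e : Bond d) : ℕ → Option (Bond d) := fun i => if i = j then some e else none

lemma measure_lace_le (hμ : IsBernoulliField μ (fun u v => q (v - u))) (n : ℕ)
    (bb : Fin (n + 1) → Bond d) (x : Vert d) :
    μ (laceEvent (n + 1) bb x) ≤ μ (occ (FullLad n (fun _ => none) (bb 0) (Fin.tail bb) x)) := by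
  refine measure_mono_ae ?_
  filter_upwards [good_ae hμ] with ω hω h
  exact Chain.mem_occ hω (h.1 n.succ_pos)
    (chain_of_forall n _ 0 bb h.2 fun i e he => by simp at he)

lemma measure_lace_pivotal_le (hμ : IsBernoulliField μ (fun u v => q (v - u))) (n : ℕ)
    (bb : Fin (n + 1) → Bond d) (x : Vert d) (j : Fin (n + 1)) (b : Bond d) :
    μ (laceEvent (n + 1) bb x ∩ {ω | Pivotal ω b (bb j).2
        (if h : j.1 + 1 < n + 1 then (bb ⟨j.1 + 1, h⟩).1 else x)}) ≤
      μ (occ (FullLad n (mk j.1 b) (bb 0) (Fin.tail bb) x)) := by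
  refine measure_mono_ae ?_
  filter_upwards [good_ae hμ] with ω hω h
  refine Chain.mem_occ hω (h.1.1 n.succ_pos)
    (chain_of_forall n _ 0 bb h.1.2 fun i e he => ?_)
  by_cases hij : i.1 = j.1
  · obtain rfl : i = j := Fin.ext hij
    obtain rfl : b = e := by simpa [mk] using he
    exact h.2
  · simp [mk, hij] at he

lemma measure_occ_Pa (htrans : ∀ u x : Vert d, μ (connEvent u x) = μ (connEvent 0 (x - u)))
    (u v : Vert d) : μ (occ (Pa u v)) ≤ phi μ (v - u) := by
  rw [phi, ← htrans]
  exact measure_mono fun ω ⟨S, hS, hω⟩ => IsPath.conn hS hω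

lemma measure_occ_Pa_self (hμ : IsBernoulliField μ (fun u v => q (v - u))) (u : Vert d) :
    μ (occ (Pa u u)) ≤ 1 := by
  have := hμ.1
  exact prob_le_one

lemma tsum_sub_right (f : Vert d → ℝ≥0∞) (v : Vert d) : ∑' b, f (b - v) = ∑' b, f b :=
  (Equiv.subRight v).tsum_eq f

lemma tsum_add_left (f : Vert d → ℝ≥0∞) (v : Vert d) : ∑' b, f (v + b) = ∑' b, f b :=
  (Equiv.addLeft v).tsum_eq f

lemma conv_sub (f g : Vert d → ℝ≥0∞) (u v : Vert d) :
    ∑' b, f (b - v) * g (u - b) = conv f g (u - v) := by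
  rw [conv, ← tsum_sub_right (fun b => f b * g (u - v - b)) v]
  simp only [sub_sub_sub_cancel_right]

lemma conv_comm (f g : Vert d → ℝ≥0∞) : conv f g = conv g f := by
  funext x
  rw [conv, conv, ← (Equiv.subLeft x).tsum_eq]
  simp only [Equiv.subLeft_apply, sub_sub_cancel, mul_comm]

lemma measure_occ_CP (hμ : IsBernoulliField μ (fun u v => q (v - u)))
    (htrans : ∀ u x : Vert d, μ (connEvent u x) = μ (connEvent 0 (x - u)))
    (u v : Vert d) : μ (occ (CP u v)) ≤ conv q (phi μ) (v - u) := by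
  have hsub : CP u v ⊆ ⋃ w, sg (u, w) ⋄ Pa w v := by
    rintro S ⟨hS, hne⟩
    cases hS with
    | nil => exact absurd rfl hne
    | @cons _ w _ S h1 h2 =>
      refine Set.mem_iUnion.2 ⟨w, {(u, w)}, rfl, S, h2, ?_, by ext; simp⟩
      exact (IsPath.single h1).disjoint_append h2
  rw [← conv_sub]
  refine (measure_mono (occ_mono hsub)).trans ((measure_occ_iUnion _).trans ?_)
  exact ENNReal.tsum_le_tsum fun w => (bk hμ _ _).trans
    (mul_le_mul' (measure_occ_sg hμ _) (measure_occ_Pa htrans _ _))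

lemma measure_occ_comp_le (hμ : IsBernoulliField μ (fun u v => q (v - u))) {A B : Fam d}
    {s t : ℝ≥0∞} (hA : μ (occ A) ≤ s) (hB : μ (occ B) ≤ t) : μ (occ (A ⋄ B)) ≤ s * t :=
  (bk hμ A B).trans (mul_le_mul' hA hB)

end Weights

/-! ### Sums over ladder diagrams -/

section Numerics

variable {φ ψ χ θ : Vert d → ℝ≥0∞} {T Tt H : ℝ≥0∞}

/-- A rung of the ladder without its connecting line `φ(y')`: `y` and `y'` are the displacements
between the two strands at the bottom and at the top of the rung. The two terms correspond to the
next side line starting from either strand. -/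
noncomputable def rung (ψ : Vert d → ℝ≥0∞) (y y' : Vert d) : ℝ≥0∞ :=
  ∑' z, (ψ (z - y) * ψ (z + y') + ψ (z + y' - y) * ψ z)

/-- The total weight of an unmarked ladder with `n + 1` rungs, as a function of the displacement
between the two strands at its bottom. -/
noncomputable def ladSum (φ ψ : Vert d → ℝ≥0∞) : ℕ → Vert d → ℝ≥0∞
  | 0, y => ∑' x, ψ (x - y) * ψ x
  | n + 1, y => ∑' y', φ y' * rung ψ y y' * ladSum φ ψ n y'

lemma tsum_shift_le {f g : Vert d → ℝ≥0∞} {C : ℝ≥0∞} (h : ∀ x, ∑' v, f v * g (v - x) ≤ C)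
    (a b : Vert d) : ∑' z, f (z - a) * g (z - b) ≤ C := by
  have := tsum_sub_right (fun z => f z * g (z - (b - a))) a
  simp only [sub_sub_sub_cancel_right] at this
  exact this.trans_le (h _)

lemma tsum_tsum_conv (f g : Vert d → ℝ≥0∞) (a : Vert d) (h : Vert d → ℝ≥0∞) :
    ∑' y, ∑' z, g y * (f (z - a) * h (z + y)) = ∑' t, conv f g (t - a) * h t := by
  rw [ENNReal.tsum_comm]
  have : ∀ z, ∑' y, g y * (f (z - a) * h (z + y)) = ∑' t, g (t - z) * (f (z - a) * h t) := by
    intro z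
    rw [← tsum_add_left (fun t => g (t - z) * (f (z - a) * h t)) z]
    simp only [add_sub_cancel_left]
  simp only [this]
  rw [ENNReal.tsum_comm]
  refine tsum_congr fun t => ?_
  rw [← conv_sub, ← ENNReal.tsum_mul_right]
  exact tsum_congr fun z => by ring

lemma tsum_rung_right (hT : ∀ x, ∑' v, conv ψ φ v * ψ (v - x) ≤ T) (y : Vert d) :
    ∑' y', φ y' * rung ψ y y' ≤ 2 * T := by
  have h1 := tsum_tsum_conv ψ φ y ψ
  have h2 := tsum_tsum_conv ψ φ 0 (fun t => ψ (t - y))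
  have e1 := tsum_shift_le hT y 0
  have e2 := tsum_shift_le hT 0 y
  simp only [sub_zero] at h2 e1 e2
  simp only [rung, ENNReal.tsum_add, mul_add, ← ENNReal.tsum_mul_left]
  rw [two_mul]
  refine add_le_add (h1.trans_le e1) (le_trans (le_of_eq ?_) (h2.trans_le e2))
  simp only [mul_comm]

lemma tsum_rung_left (hT : ∀ x, ∑' v, conv ψ φ v * ψ (v - x) ≤ T) (y' : Vert d) :
    ∑' y, φ y * rung ψ y y' ≤ 2 * T := by
  simp only [rung, ENNReal.tsum_add, mul_add, ← ENNReal.tsum_mul_left]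
  rw [two_mul]
  have e1 := tsum_shift_le hT 0 (-y')
  have e2 := tsum_shift_le hT (-y') 0
  simp only [sub_zero, sub_neg_eq_add] at e1 e2
  rw [ENNReal.tsum_comm, ENNReal.tsum_comm (f := fun y z => φ y * (ψ (z + y' - y) * ψ z))]
  refine add_le_add (le_trans (le_of_eq ?_) e1) (le_trans (le_of_eq ?_) e2)
  · refine tsum_congr fun z => ?_
    rw [conv_comm, conv, ← ENNReal.tsum_mul_right]
    simp only [mul_assoc]
  · refine tsum_congr fun z => ?_
    rw [conv_comm, conv, ← ENNReal.tsum_mul_right]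
    simp only [mul_assoc]

lemma le_conv_right (h0 : 1 ≤ φ 0) (x : Vert d) : ψ x ≤ conv ψ φ x := by
  refine le_trans ?_ (ENNReal.le_tsum x)
  rw [sub_self]
  exact le_mul_of_one_le_right' h0

lemma ladSum_le (h0 : 1 ≤ φ 0) (hT : ∀ x, ∑' v, conv ψ φ v * ψ (v - x) ≤ T) (n : ℕ) :
    ∀ y, ladSum φ ψ n y ≤ T * (2 * T) ^ n := by
  induction n with
  | zero =>
    intro y
    have e := tsum_shift_le hT y 0
    simp only [sub_zero] at e
    rw [pow_zero, mul_one]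
    exact le_trans (ENNReal.tsum_le_tsum fun x => mul_le_mul_left (le_conv_right h0 _) _) e
  | succ n ih =>
    intro y
    calc ladSum φ ψ (n + 1) y ≤ ∑' y', φ y' * rung ψ y y' * (T * (2 * T) ^ n) :=
          ENNReal.tsum_le_tsum fun y' => mul_le_mul_right (ih y') _
      _ ≤ 2 * T * (T * (2 * T) ^ n) := by
          rw [ENNReal.tsum_mul_right]
          exact mul_le_mul_left (tsum_rung_right hT y) _
      _ = T * (2 * T) ^ (n + 1) := by ring

/-- The bottom displacement of an unmarked ladder may be summed against a further line. -/
lemma tsum_ladSum_le (hT : ∀ x, ∑' v, conv ψ φ v * ψ (v - x) ≤ T) (n : ℕ) :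
    ∑' y, φ y * ladSum φ ψ n y ≤ T * (2 * T) ^ n := by
  induction n with
  | zero =>
    have e := hT 0
    simp only [sub_zero] at e
    rw [pow_zero, mul_one]
    refine le_trans (le_of_eq ?_) e
    simp only [ladSum, ← ENNReal.tsum_mul_left]
    rw [ENNReal.tsum_comm]
    refine tsum_congr fun z => ?_
    rw [conv_comm, conv, ← ENNReal.tsum_mul_right]
    simp only [mul_assoc]
  | succ n ih =>
    calc ∑' y, φ y * ladSum φ ψ (n + 1) y
        = ∑' y', (∑' y, φ y * rung ψ y y') * (φ y' * ladSum φ ψ n y') := by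
          simp only [ladSum, ← ENNReal.tsum_mul_left, ← ENNReal.tsum_mul_right]
          rw [ENNReal.tsum_comm]
          exact tsum_congr fun y' => tsum_congr fun y => by ring
      _ ≤ ∑' y', 2 * T * (φ y' * ladSum φ ψ n y') :=
          ENNReal.tsum_le_tsum fun y' => mul_le_mul_left (tsum_rung_left hT y') _
      _ ≤ 2 * T * (T * (2 * T) ^ n) := by
          rw [ENNReal.tsum_mul_left]
          exact mul_le_mul_right ih _
      _ = T * (2 * T) ^ (n + 1) := by ring

/-- The H-shaped diagram, with its vertices written relative to the bottom of the crossbar. -/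
lemma tsum_H_le (hH : ∀ x y, ∑' u, ∑' v, ∑' w,
      ψ u * θ (v - u) * ψ (v - x) * ψ (w - u) * ψ (y + w - v) ≤ H) (a c : Vert d) :
    ∑' y', ∑' z, ψ (z - a) * θ y' * ψ (z + y') * ∑' w, ψ w * ψ (w + c - y') ≤ H := by
  refine le_trans (le_of_eq (Eq.symm ?_)) (hH (-a) c)
  rw [← tsum_sub_right _ a]
  trans ∑' z, ∑' y', ∑' w, ψ (z - a) * θ y' * ψ (z + y') * (ψ w * ψ (w + c - y'))
  · refine tsum_congr fun z => ?_
    rw [← tsum_add_left _ (z - a)]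
    refine tsum_congr fun y' => ?_
    rw [← tsum_add_left _ (z - a)]
    refine tsum_congr fun w => ?_
    have e1 : z - a + y' - (z - a) = y' := by abel
    have e2 : z - a + y' - -a = z + y' := by abel
    have e3 : z - a + w - (z - a) = w := by abel
    have e4 : c + (z - a + w) - (z - a + y') = w + c - y' := by abel
    rw [e1, e2, e3, e4]
    ring
  · rw [ENNReal.tsum_comm]
    simp only [ENNReal.tsum_mul_left]

lemma tsum_tsum_mul_tsum (G K : Vert d → Vert d → ℝ≥0∞) (f : Vert d → ℝ≥0∞) :
    ∑' y, ∑' z, G y z * ∑' t, f t * K y t = ∑' t, f t * ∑' y, ∑' z, G y z * K y t := by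
  simp only [← ENNReal.tsum_mul_left]
  symm
  rw [ENNReal.tsum_comm]
  refine tsum_congr fun y => ?_
  rw [ENNReal.tsum_comm]
  exact tsum_congr fun z => tsum_congr fun t => by ring

/-- A rung whose crossbar carries the marked bond, followed by an unmarked ladder. -/
lemma tsum_H_ladSum_le (hT : ∀ x, ∑' v, conv ψ φ v * ψ (v - x) ≤ T)
    (hH : ∀ x y, ∑' u, ∑' v, ∑' w,
      ψ u * θ (v - u) * ψ (v - x) * ψ (w - u) * ψ (y + w - v) ≤ H) (a : Vert d) (n : ℕ) :
    ∑' y', ∑' z, ψ (z - a) * θ y' * ψ (z + y') * ladSum φ ψ n y' ≤ H * (2 * T) ^ n := by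
  cases n with
  | zero =>
    rw [pow_zero, mul_one]
    refine le_trans (le_of_eq ?_) (tsum_H_le hH a 0)
    simp only [ladSum, add_zero, mul_comm]
  | succ n =>
    have hk : ∀ y' y'', rung ψ y' y'' =
        ∑' w, ψ w * ψ (w + -y'' - y') + ∑' w, ψ w * ψ (w + y'' - y') := by
      intro y' y''
      rw [rung, ENNReal.tsum_add, ← tsum_sub_right (fun z => ψ (z - y') * ψ (z + y'')) y'']
      simp only [sub_add_cancel]
      simp only [sub_eq_add_neg, mul_comm]
    calc ∑' y', ∑' z, ψ (z - a) * θ y' * ψ (z + y') * ladSum φ ψ (n + 1) y'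
        = ∑' y'', (φ y'' * ladSum φ ψ n y'') *
            (∑' y', ∑' z, ψ (z - a) * θ y' * ψ (z + y') * (∑' w, ψ w * ψ (w + -y'' - y')) +
             ∑' y', ∑' z, ψ (z - a) * θ y' * ψ (z + y') * ∑' w, ψ w * ψ (w + y'' - y')) := by
          simp only [← ENNReal.tsum_add, ← mul_add]
          rw [← tsum_tsum_mul_tsum]
          simp only [ladSum, hk, ← ENNReal.tsum_add, ← mul_add, mul_right_comm (φ _)]
      _ ≤ ∑' y'', (φ y'' * ladSum φ ψ n y'') * (H + H) :=
          ENNReal.tsum_le_tsum fun y'' =>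
            mul_le_mul_right (add_le_add (tsum_H_le hH a _) (tsum_H_le hH a _)) _
      _ ≤ T * (2 * T) ^ n * (H + H) := by
          rw [ENNReal.tsum_mul_right]
          exact mul_le_mul_left (tsum_ladSum_le hT n) _
      _ = H * (2 * T) ^ (n + 1) := by ring

end Numerics

/-! ### Summing the ladder families over their vertices -/

section Ladder

variable {μ : Measure (Config d)} {q : Vert d → ℝ≥0∞}

/-- The total probability of ladders with `n + 1` rungs whose two strands start at `u` and `v`. -/
noncomputable def La (μ : Measure (Config d)) (n : ℕ) (m : ℕ → Option (Bond d)) (u v : Vert d) :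
    ℝ≥0∞ :=
  ∑' w : Vert d, ∑' bb : Fin n → Bond d, ∑' x, μ (occ (Lad n m u (v, w) bb x))

lemma tsum_conv_conv (f g h k : Vert d → ℝ≥0∞) (v w : Vert d) :
    ∑' c : Bond d, ∑' a, f (a - v) * (g (c.1 - a) * (h (c.2 - c.1) * k (w - c.2))) =
      conv (conv (conv f g) h) k (w - v) := by
  rw [ENNReal.tsum_prod', ENNReal.tsum_comm, ← conv_sub]
  refine tsum_congr fun c₂ => ?_
  rw [← conv_sub, ← ENNReal.tsum_mul_right]
  refine tsum_congr fun c₁ => ?_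
  rw [← conv_sub, ← ENNReal.tsum_mul_right, ← ENNReal.tsum_mul_right]
  exact tsum_congr fun a => by ring

lemma tsum_conv_mul_conv (f g h k l : Vert d → ℝ≥0∞) (u v w : Vert d) :
    ∑' c : Bond d, ∑' a, f (a - v) * (g (u - a) *
      (h (c.1 - u) * (k (c.2 - c.1) * l (w - c.2)))) =
      conv f g (u - v) * conv (conv h k) l (w - u) := by
  rw [ENNReal.tsum_prod', ENNReal.tsum_comm, ← conv_sub (conv h k), ← ENNReal.tsum_mul_left]
  refine tsum_congr fun c₂ => ?_
  rw [← conv_sub h k, ← ENNReal.tsum_mul_right, ← ENNReal.tsum_mul_left]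
  refine tsum_congr fun c₁ => ?_
  rw [← conv_sub f g, ← ENNReal.tsum_mul_right]
  exact tsum_congr fun a => by ring

lemma tsum_rung_none_le (hμ : IsBernoulliField μ (fun u v => q (v - u)))
    (htrans : ∀ u x : Vert d, μ (connEvent u x) = μ (connEvent 0 (x - u))) (u v u' v' : Vert d) :
    ∑' w, μ (occ (Rg none u (v, w) u' v')) ≤
      conv q (phi μ) (u' - v) * phi μ (v' - u') * conv q (phi μ) (v' - u) +
        conv q (phi μ) (v' - v) * conv q (phi μ) (u' - u) * phi μ (v' - u') := by
  have hsg := measure_occ_sg hμ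
  have hPa := measure_occ_Pa htrans
  have hCP := measure_occ_CP hμ htrans
  refine le_trans (ENNReal.tsum_le_tsum fun w => (measure_occ_union _ _).trans (add_le_add
    (measure_occ_comp_le hμ (hsg _) (measure_occ_comp_le hμ
      (measure_occ_comp_le hμ (hPa _ _) (hPa _ _)) (hCP _ _)))
    (measure_occ_comp_le hμ (hsg _) (measure_occ_comp_le hμ (hPa _ _)
      (measure_occ_comp_le hμ (hCP _ _) (hPa _ _)))))) ?_
  rw [ENNReal.tsum_add]
  refine le_of_eq (congrArg₂ _ ?_ ?_)
  · rw [← conv_sub q (phi μ) u', mul_assoc, ← ENNReal.tsum_mul_right]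
    exact tsum_congr fun w => by ring
  · rw [← conv_sub q (phi μ) v' v, mul_assoc, ← ENNReal.tsum_mul_right]
    exact tsum_congr fun w => by ring

lemma tsum_rung_some_le (hμ : IsBernoulliField μ (fun u v => q (v - u)))
    (htrans : ∀ u x : Vert d, μ (connEvent u x) = μ (connEvent 0 (x - u))) (u v u' v' : Vert d) :
    ∑' c, ∑' w, μ (occ (Rg (some c) u (v, w) u' v')) ≤
      conv (conv (conv q (phi μ)) q) (phi μ) (u' - v) * phi μ (v' - u') * conv q (phi μ) (v' - u) +
      conv q (phi μ) (u' - v) * conv (conv (phi μ) q) (phi μ) (v' - u') * conv q (phi μ) (v' - u) +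
      conv (conv (conv q (phi μ)) q) (phi μ) (v' - v) * conv q (phi μ) (u' - u) *
        phi μ (v' - u') := by
  have hsg := measure_occ_sg hμ
  have hPa := measure_occ_Pa htrans
  have hCP := measure_occ_CP hμ htrans
  have hc : ∀ {A B : Fam d} {s t : ℝ≥0∞}, μ (occ A) ≤ s → μ (occ B) ≤ t →
    μ (occ (A ⋄ B)) ≤ s * t := measure_occ_comp_le hμ
  have hsplit : ∀ (b : Bond d) (A B C : Fam d), sg b ⋄ (A ∪ B) ⋄ C ⊆ sg b ⋄ A ⋄ C ∪ sg b ⋄ B ⋄ C := by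
    rintro b A B C _ ⟨S, hS, _, ⟨U, hU | hU, V, hV, hd, rfl⟩, hd', rfl⟩
    · exact Or.inl ⟨S, hS, _, ⟨U, hU, V, hV, hd, rfl⟩, hd', rfl⟩
    · exact Or.inr ⟨S, hS, _, ⟨U, hU, V, hV, hd, rfl⟩, hd', rfl⟩
  refine le_trans (ENNReal.tsum_le_tsum fun c => ENNReal.tsum_le_tsum fun w =>
    (measure_occ_union _ _).trans (add_le_add
      ((measure_mono (occ_mono (hsplit _ _ _ _))).trans ((measure_occ_union _ _).trans (add_le_add
        (hc (hsg _) (hc (hc (hPa _ _) (hc (hsg _) (hc (hPa _ _) (hPa _ _)))) (hCP _ _)))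
        (hc (hsg _) (hc (hc (hPa _ _) (hc (hPa _ _) (hc (hsg _) (hPa _ _)))) (hCP _ _))))))
      (hc (hsg _) (hc (hc (hPa _ _) (hc (hsg _) (hPa _ _))) (hc (hCP _ _) (hPa _ _)))))) ?_
  simp only [ENNReal.tsum_add]
  refine le_of_eq (congrArg₂ _ (congrArg₂ _ ?_ ?_) ?_)
  · rw [← tsum_conv_conv q (phi μ) q (phi μ), mul_assoc, ← ENNReal.tsum_mul_right]
    simp only [← ENNReal.tsum_mul_right]
    exact tsum_congr fun c => tsum_congr fun w => by ring
  · rw [← tsum_conv_mul_conv, ← ENNReal.tsum_mul_right]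
    simp only [← ENNReal.tsum_mul_right]
    exact tsum_congr fun c => tsum_congr fun w => by ring
  · rw [← tsum_conv_conv q (phi μ) q (phi μ), mul_assoc, ← ENNReal.tsum_mul_right]
    simp only [← ENNReal.tsum_mul_right]
    exact tsum_congr fun c => tsum_congr fun w => by ring

lemma tsum_fin_succ (n : ℕ) (f : (Fin (n + 1) → Bond d) → ℝ≥0∞) :
    ∑' bb, f bb = ∑' v, ∑' w, ∑' bb : Fin n → Bond d, f (Fin.cons (v, w) bb) := by
  rw [← (Fin.consEquiv fun _ => Bond d).tsum_eq, ENNReal.tsum_prod', ENNReal.tsum_prod']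
  rfl

lemma La_zero (m : ℕ → Option (Bond d)) (u v : Vert d) :
    La μ 0 m u v = ∑' w : Vert d, ∑' x, μ (occ (sg (v, w) ⋄ St (m 0) w x ⋄ CP u x)) := by
  refine tsum_congr fun w => ?_
  rw [tsum_eq_single default fun b hb => absurd (Subsingleton.elim _ _) hb]
  rfl

lemma La_succ (hμ : IsBernoulliField μ (fun u v => q (v - u))) (n : ℕ)
    (m : ℕ → Option (Bond d)) (u v : Vert d) :
    La μ (n + 1) m u v ≤ ∑' v', ∑' u', (∑' w, μ (occ (Rg (m 0) u (v, w) u' v'))) *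
      La μ n (fun i => m (i + 1)) u' v' := by
  calc La μ (n + 1) m u v
      ≤ ∑' w, ∑' v', ∑' w', ∑' bb : Fin n → Bond d, ∑' x, ∑' u',
          μ (occ (Rg (m 0) u (v, w) u' v')) *
            μ (occ (Lad n (fun i => m (i + 1)) u' (v', w') bb x)) := by
        refine ENNReal.tsum_le_tsum fun w => ?_
        rw [tsum_fin_succ]
        refine ENNReal.tsum_le_tsum fun v' => ENNReal.tsum_le_tsum fun w' =>
          ENNReal.tsum_le_tsum fun bb => ENNReal.tsum_le_tsum fun x => ?_
        exact (measure_occ_iUnion _).trans (ENNReal.tsum_le_tsum fun u' => bk hμ _ _)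
    _ = _ := by
        rw [ENNReal.tsum_comm]
        refine tsum_congr fun v' => ?_
        simp only [← ENNReal.tsum_mul_right]
        conv_rhs => rw [ENNReal.tsum_comm]
        refine tsum_congr fun w => ?_
        simp only [La, ← ENNReal.tsum_mul_left]
        symm
        rw [ENNReal.tsum_comm]
        refine tsum_congr fun w' => ?_
        rw [ENNReal.tsum_comm]
        exact tsum_congr fun bb => ENNReal.tsum_comm

/-- Change of variables from the top vertices of a rung to the displacements along it. -/
lemma tsum_tsum_shift (F : Vert d → Vert d → ℝ≥0∞) (u : Vert d) :
    ∑' v', ∑' u', F u' v' = ∑' y, ∑' z, F (u + z) (u + z + y) := by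
  rw [ENNReal.tsum_comm, ← tsum_add_left _ u]
  conv_rhs => rw [ENNReal.tsum_comm]
  exact tsum_congr fun z => (tsum_add_left _ _).symm

lemma tsum_rung_none_mul_le (hμ : IsBernoulliField μ (fun u v => q (v - u)))
    (htrans : ∀ u x : Vert d, μ (connEvent u x) = μ (connEvent 0 (x - u))) (u v : Vert d)
    (g : Vert d → ℝ≥0∞) :
    ∑' v', ∑' u', (∑' w, μ (occ (Rg none u (v, w) u' v'))) * g (v' - u') ≤
      ∑' y, phi μ y * rung (conv q (phi μ)) (v - u) y * g y := by
  refine le_trans (ENNReal.tsum_le_tsum fun v' => ENNReal.tsum_le_tsum fun u' =>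
    mul_le_mul_left (tsum_rung_none_le hμ htrans u v u' v') _) (le_of_eq ?_)
  rw [tsum_tsum_shift _ u]
  refine tsum_congr fun y => ?_
  rw [rung, ← ENNReal.tsum_mul_left, ← ENNReal.tsum_mul_right]
  refine tsum_congr fun z => ?_
  have e1 : u + z - v = z - (v - u) := by abel
  have e2 : u + z + y - (u + z) = y := by abel
  have e3 : u + z + y - u = z + y := by abel
  have e4 : u + z + y - v = z + y - (v - u) := by abel
  have e5 : u + z - u = z := by abel
  rw [e1, e2, e3, e4, e5]
  ring

lemma tsum_rung_some_mul_le (hμ : IsBernoulliField μ (fun u v => q (v - u)))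
    (htrans : ∀ u x : Vert d, μ (connEvent u x) = μ (connEvent 0 (x - u)))
    {χ ψ θ : Vert d → ℝ≥0∞} (hχ : χ = conv (conv (conv q (phi μ)) q) (phi μ))
    (hψ : ψ = conv q (phi μ)) (hθ : θ = conv (conv (phi μ) q) (phi μ)) (u v : Vert d)
    (g : Vert d → ℝ≥0∞) :
    ∑' v', ∑' u', (∑' c, ∑' w, μ (occ (Rg (some c) u (v, w) u' v'))) * g (v' - u') ≤
      ∑' y, (∑' z, χ (z - (v - u)) * ψ (z + y)) * (phi μ y * g y) +
      ∑' y, ∑' z, ψ (z - (v - u)) * θ y * ψ (z + y) * g y +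
      ∑' y, (∑' z, χ (z + y - (v - u)) * ψ z) * (phi μ y * g y) := by
  refine le_trans (ENNReal.tsum_le_tsum fun v' => ENNReal.tsum_le_tsum fun u' =>
    mul_le_mul_left (tsum_rung_some_le hμ htrans u v u' v') _) (le_of_eq ?_)
  rw [tsum_tsum_shift _ u, ← ENNReal.tsum_add, ← ENNReal.tsum_add, ← hχ, ← hψ, ← hθ]
  refine tsum_congr fun y => ?_
  rw [← ENNReal.tsum_mul_right, ← ENNReal.tsum_mul_right, ← ENNReal.tsum_add, ← ENNReal.tsum_add]
  refine tsum_congr fun z => ?_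
  have e1 : u + z - v = z - (v - u) := by abel
  have e2 : u + z + y - (u + z) = y := by abel
  have e3 : u + z + y - u = z + y := by abel
  have e4 : u + z + y - v = z + y - (v - u) := by abel
  have e5 : u + z - u = z := by abel
  rw [e1, e2, e3, e4, e5]
  ring

lemma La_none_le (hμ : IsBernoulliField μ (fun u v => q (v - u)))
    (htrans : ∀ u x : Vert d, μ (connEvent u x) = μ (connEvent 0 (x - u))) (n : ℕ) :
    ∀ u v : Vert d, La μ n (fun _ => none) u v ≤ ladSum (phi μ) (conv q (phi μ)) n (v - u) := by
  induction n with
  | zero =>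
    intro u v
    rw [La_zero, ladSum, ENNReal.tsum_comm, ← tsum_sub_right (fun x => _ * _) u]
    refine ENNReal.tsum_le_tsum fun x => ?_
    rw [sub_sub_sub_cancel_right, ← conv_sub, ← ENNReal.tsum_mul_right]
    refine ENNReal.tsum_le_tsum fun w => ?_
    rw [mul_assoc]
    exact measure_occ_comp_le hμ (measure_occ_sg hμ _) (measure_occ_comp_le hμ
      (measure_occ_Pa htrans _ _) (measure_occ_CP hμ htrans _ _))
  | succ n ih =>
    intro u v
    refine (La_succ hμ n _ u v).trans (le_trans ?_ (tsum_rung_none_mul_le hμ htrans u v _))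
    exact ENNReal.tsum_le_tsum fun v' => ENNReal.tsum_le_tsum fun u' =>
      mul_le_mul_right (ih u' v') _

variable {T Tt H : ℝ≥0∞}

/-- A ladder with one marked bond. When the marked bond lies on the first rung, the three summands
of `tsum_rung_some_mul_le` give two modified triangles and one H-shaped diagram; otherwise the
first rung is a pair of triangles. -/
lemma tsum_La_mk_le (hμ : IsBernoulliField μ (fun u v => q (v - u)))
    (htrans : ∀ u x : Vert d, μ (connEvent u x) = μ (connEvent 0 (x - u)))
    {χ ψ θ : Vert d → ℝ≥0∞} (hχ : χ = conv (conv (conv q (phi μ)) q) (phi μ))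
    (hψ : ψ = conv q (phi μ)) (hθ : θ = conv (conv (phi μ) q) (phi μ))
    (hT : ∀ x, ∑' v, conv ψ (phi μ) v * ψ (v - x) ≤ T)
    (hTt : ∀ x, ∑' v, χ v * ψ (v - x) ≤ Tt)
    (hH : ∀ x y, ∑' u, ∑' v, ∑' w,
      ψ u * θ (v - u) * ψ (v - x) * ψ (w - u) * ψ (y + w - v) ≤ H) (n : ℕ) :
    ∀ (j : ℕ), j ≤ n → ∀ u v : Vert d, ∑' c, La μ n (mk j c) u v ≤
      Tt * (2 * T) ^ n + H * (if n = 0 then 0 else (2 * T) ^ (n - 1)) := by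
  induction n with
  | zero =>
    intro j hj u v
    obtain rfl : j = 0 := by omega
    have e := tsum_shift_le hTt (v - u) 0
    rw [pow_zero, mul_one, if_pos rfl, mul_zero, add_zero]
    refine le_trans ?_ e
    simp only [sub_zero, La_zero]
    calc ∑' c : Bond d, ∑' w, ∑' x, μ (occ (sg (v, w) ⋄ St (mk 0 c 0) w x ⋄ CP u x))
        ≤ ∑' c : Bond d, ∑' w, ∑' x, q (w - v) * ((phi μ (c.1 - w) * (q (c.2 - c.1) *
            phi μ (x - c.2))) * ψ (x - u)) :=
          ENNReal.tsum_le_tsum fun c => ENNReal.tsum_le_tsum fun w => ENNReal.tsum_le_tsum fun x =>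
            measure_occ_comp_le hμ (measure_occ_sg hμ _) (measure_occ_comp_le hμ
              (measure_occ_comp_le hμ (measure_occ_Pa htrans _ _) (measure_occ_comp_le hμ
                (measure_occ_sg hμ _) (measure_occ_Pa htrans _ _)))
              ((measure_occ_CP hμ htrans _ _).trans_eq (by rw [hψ])))
      _ = ∑' x, ∑' c : Bond d, ∑' w, q (w - v) * ((phi μ (c.1 - w) * (q (c.2 - c.1) *
            phi μ (x - c.2))) * ψ (x - u)) := by
          rw [ENNReal.tsum_comm]
          conv_rhs => rw [ENNReal.tsum_comm]
          conv_lhs => rw [ENNReal.tsum_comm]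
          exact tsum_congr fun c => ENNReal.tsum_comm
      _ = ∑' x, χ (x - (v - u)) * ψ x := by
          rw [← tsum_sub_right (fun x => χ (x - (v - u)) * ψ x) u]
          refine tsum_congr fun x => ?_
          rw [sub_sub_sub_cancel_right, hχ, ← tsum_conv_conv, ← ENNReal.tsum_mul_right]
          refine tsum_congr fun c => ?_
          rw [← ENNReal.tsum_mul_right]
          simp only [mul_assoc]
      _ ≤ _ := le_rfl
  | succ n ih =>
    intro j hj u v
    rw [if_neg n.succ_ne_zero, Nat.add_sub_cancel]
    refine (ENNReal.tsum_le_tsum fun c => La_succ hμ n _ u v).trans ?_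
    rw [ENNReal.tsum_comm]
    cases j with
    | zero =>
      calc ∑' v', ∑' c, ∑' u', (∑' w, μ (occ (Rg (mk 0 c 0) u (v, w) u' v'))) *
            La μ n (fun i => mk 0 c (i + 1)) u' v'
          = ∑' v', ∑' u', (∑' c, ∑' w, μ (occ (Rg (some c) u (v, w) u' v'))) *
            La μ n (fun _ => none) u' v' := by
            refine tsum_congr fun v' => ?_
            rw [ENNReal.tsum_comm]
            refine tsum_congr fun u' => ?_
            rw [← ENNReal.tsum_mul_right]
            rfl
        _ ≤ ∑' v', ∑' u', (∑' c, ∑' w, μ (occ (Rg (some c) u (v, w) u' v'))) *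
            ladSum (phi μ) ψ n (v' - u') :=
            ENNReal.tsum_le_tsum fun v' => ENNReal.tsum_le_tsum fun u' =>
              mul_le_mul_right (hψ ▸ La_none_le hμ htrans n u' v') _
        _ ≤ Tt * (T * (2 * T) ^ n) + H * (2 * T) ^ n + Tt * (T * (2 * T) ^ n) := by
            refine (tsum_rung_some_mul_le hμ htrans hχ hψ hθ u v _).trans
              (add_le_add (add_le_add ?_ (tsum_H_ladSum_le hT hH _ n)) ?_)
            · refine le_trans (ENNReal.tsum_le_tsum fun y => mul_le_mul_left (?_ : _ ≤ Tt) _) ?_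
              · simpa using tsum_shift_le hTt (v - u) (-y)
              · rw [ENNReal.tsum_mul_left]
                exact mul_le_mul_right (tsum_ladSum_le hT n) _
            · refine le_trans (ENNReal.tsum_le_tsum fun y => mul_le_mul_left (?_ : _ ≤ Tt) _) ?_
              · simpa [sub_sub_eq_add_sub, add_comm] using tsum_shift_le hTt (v - u - y) 0
              · rw [ENNReal.tsum_mul_left]
                exact mul_le_mul_right (tsum_ladSum_le hT n) _
        _ = Tt * (2 * T) ^ (n + 1) + H * (2 * T) ^ n := by ring
    | succ j =>
      set B := Tt * (2 * T) ^ n + H * (if n = 0 then 0 else (2 * T) ^ (n - 1)) with hB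
      calc ∑' v', ∑' c, ∑' u', (∑' w, μ (occ (Rg (mk (j + 1) c 0) u (v, w) u' v'))) *
            La μ n (fun i => mk (j + 1) c (i + 1)) u' v'
          = ∑' v', ∑' u', (∑' w, μ (occ (Rg none u (v, w) u' v'))) *
            ∑' c, La μ n (mk j c) u' v' := by
            refine tsum_congr fun v' => ?_
            rw [ENNReal.tsum_comm]
            refine tsum_congr fun u' => ?_
            rw [← ENNReal.tsum_mul_left]
            refine tsum_congr fun c => ?_
            simp only [mk, add_left_inj]
            rfl
        _ ≤ ∑' v', ∑' u', (∑' w, μ (occ (Rg none u (v, w) u' v'))) * B :=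
            ENNReal.tsum_le_tsum fun v' => ENNReal.tsum_le_tsum fun u' =>
              mul_le_mul_right (ih j (by omega) u' v') _
        _ ≤ 2 * T * B := by
            refine (tsum_rung_none_mul_le hμ htrans u v (fun _ => B)).trans ?_
            rw [ENNReal.tsum_mul_right, ← hψ]
            exact mul_le_mul_left (tsum_rung_right hT _) _
        _ ≤ Tt * (2 * T) ^ (n + 1) + H * (2 * T) ^ n := by
            rw [hB, mul_add]
            refine add_le_add (le_of_eq (by ring)) ?_
            split_ifs with h
            · simp
            · obtain ⟨k, rfl⟩ := Nat.exists_eq_succ_of_ne_zero h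
              exact le_of_eq (by rw [Nat.succ_sub_one, pow_succ]; ring)

end Ladder

/-! ### Assembling the bound -/

section Assembly

variable {μ : Measure (Config d)} {q : Vert d → ℝ≥0∞} {T : ℝ≥0∞}

lemma one_le_phi_zero (hμ : IsBernoulliField μ (fun u v => q (v - u))) : 1 ≤ phi μ 0 := by
  have := hμ.1
  have h : connEvent (0 : Vert d) 0 = Set.univ := Set.eq_univ_of_forall fun ω => Conn.refl 0
  rw [phi, h, measure_univ]

lemma measure_occ_Pa_of_ne (hμ : IsBernoulliField μ (fun u v => q (v - u)))
    (htrans : ∀ u x : Vert d, μ (connEvent u x) = μ (connEvent 0 (x - u))) {u v : Vert d}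
    (h : u ≠ v) : μ (occ (Pa u v)) ≤ conv q (phi μ) (v - u) :=
  (measure_mono (occ_mono (show Pa u v ⊆ CP u v from fun _ hS => ⟨hS, h⟩))).trans
    (measure_occ_CP hμ htrans u v)

/-- The double connection `0 ⇒ v` together with a vertex `u` on one of its strands. The summands
belong to `u = v = 0`, to `u = 0 ≠ v`, and to `u, v ≠ 0`. -/
lemma measure_occ_start_le (hμ : IsBernoulliField μ (fun u v => q (v - u)))
    (htrans : ∀ u x : Vert d, μ (connEvent u x) = μ (connEvent 0 (x - u))) (u v : Vert d) :
    μ (occ (Pa 0 u ⋄ Pa u v ⋄ Pa 0 v)) ≤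
      (if v = 0 then if u = 0 then 1 else 0 else 0) +
      (if u = 0 then conv q (phi μ) v * conv q (phi μ) v else 0) +
      conv q (phi μ) u * phi μ (v - u) * conv q (phi μ) v := by
  have := hμ.1
  have hne : ∀ w : Vert d, w ≠ 0 → μ (occ (Pa 0 w)) ≤ conv q (phi μ) w := fun w hw => by
    simpa using measure_occ_Pa_of_ne hμ htrans hw.symm
  by_cases hu : u = 0
  · subst hu
    rw [if_pos rfl, if_pos rfl]
    by_cases hv : v = 0
    · rw [if_pos hv]
      exact prob_le_one.trans (le_add_right (le_add_right le_rfl))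
    · rw [if_neg hv, zero_add]
      refine (measure_occ_comp_le hμ (measure_occ_Pa_self hμ 0)
        (measure_occ_comp_le hμ (hne v hv) (hne v hv))).trans ?_
      rw [one_mul]
      exact le_add_right le_rfl
  · by_cases hv : v = 0
    · -- No path returns to its starting time.
      have h0 : occ (Pa (0 : Vert d) u ⋄ Pa u v ⋄ Pa 0 v) = ∅ := by
        refine Set.eq_empty_of_forall_notMem ?_
        rintro ω ⟨_, ⟨S, hS, _, ⟨U, hU, _, _, _, rfl⟩, _, rfl⟩, _⟩
        have h1 := IsPath.le hS
        have h2 := IsPath.le hU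
        subst hv
        exact hu (IsPath.eq_of_time hS (le_antisymm h1 h2)).symm
      rw [h0, measure_empty]
      exact bot_le
    · rw [mul_assoc]
      exact (measure_occ_comp_le hμ (hne u hu) (measure_occ_comp_le hμ
        (measure_occ_Pa htrans u v) (hne v hv))).trans (le_add_left le_rfl)

lemma tsum_start_le (hμ : IsBernoulliField μ (fun u v => q (v - u)))
    (htrans : ∀ u x : Vert d, μ (connEvent u x) = μ (connEvent 0 (x - u)))
    (hT : ∀ x, ∑' v, conv (conv q (phi μ)) (phi μ) v * conv q (phi μ) (v - x) ≤ T) :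
    ∑' v, ∑' u, μ (occ (Pa (0 : Vert d) u ⋄ Pa u v ⋄ Pa 0 v)) ≤ 1 + 2 * T := by
  have e := hT 0
  simp only [sub_zero] at e
  refine (ENNReal.tsum_le_tsum fun v => ENNReal.tsum_le_tsum fun u =>
    measure_occ_start_le hμ htrans u v).trans ?_
  simp only [ENNReal.tsum_add]
  rw [two_mul, ← add_assoc]
  refine add_le_add (add_le_add ?_ ?_) ?_
  · refine le_of_eq ?_
    rw [tsum_eq_single 0 fun v hv => by simp [hv], tsum_eq_single 0 fun u hu => by simp [hu]]
    simp
  · refine le_trans (ENNReal.tsum_le_tsum fun v => ?_) e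
    rw [tsum_eq_single 0 fun u hu => by simp [hu], if_pos rfl]
    exact mul_le_mul_left (le_conv_right (one_le_phi_zero hμ) v) _
  · refine le_trans (le_of_eq (tsum_congr fun v => ?_)) e
    exact ENNReal.tsum_mul_right

lemma tsum_FullLad_le (hμ : IsBernoulliField μ (fun u v => q (v - u))) (n : ℕ)
    (m : ℕ → Option (Bond d)) :
    ∑' x, ∑' bb : Fin (n + 1) → Bond d, μ (occ (FullLad n m (bb 0) (Fin.tail bb) x)) ≤
      ∑' v, ∑' u, μ (occ (Pa (0 : Vert d) u ⋄ Pa u v ⋄ Pa 0 v)) * La μ n m u v := by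
  calc ∑' x, ∑' bb : Fin (n + 1) → Bond d, μ (occ (FullLad n m (bb 0) (Fin.tail bb) x))
      = ∑' bb : Fin (n + 1) → Bond d, ∑' x, μ (occ (FullLad n m (bb 0) (Fin.tail bb) x)) :=
        ENNReal.tsum_comm
    _ ≤ ∑' v, ∑' w, ∑' bb : Fin n → Bond d, ∑' x, ∑' u,
          μ (occ (Pa (0 : Vert d) u ⋄ Pa u v ⋄ Pa 0 v)) * μ (occ (Lad n m u (v, w) bb x)) := by
        rw [tsum_fin_succ]
        refine ENNReal.tsum_le_tsum fun v => ENNReal.tsum_le_tsum fun w =>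
          ENNReal.tsum_le_tsum fun bb => ENNReal.tsum_le_tsum fun x => ?_
        exact (measure_occ_iUnion _).trans (ENNReal.tsum_le_tsum fun u => bk hμ _ _)
    _ = _ := by
        refine tsum_congr fun v => ?_
        simp only [La, ← ENNReal.tsum_mul_left]
        symm
        rw [ENNReal.tsum_comm]
        refine tsum_congr fun w => ?_
        rw [ENNReal.tsum_comm]
        exact tsum_congr fun bb => ENNReal.tsum_comm

/-- The first summand belongs to `b = b_j`, the second one to `b ∈ piv(b̄_j, b̲_{j+1})`. -/
lemma tsum_PiCoef_le (hμ : IsBernoulliField μ (fun u v => q (v - u))) (n : ℕ) :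
    ∑' x, PiCoef μ (n + 1) x ≤ ∑ j : Fin (n + 1),
      (∑' v, ∑' u, μ (occ (Pa (0 : Vert d) u ⋄ Pa u v ⋄ Pa 0 v)) * La μ n (fun _ => none) u v +
        ∑' v, ∑' u, μ (occ (Pa (0 : Vert d) u ⋄ Pa u v ⋄ Pa 0 v)) *
          ∑' c, La μ n (mk j.1 c) u v) := by
  calc ∑' x, PiCoef μ (n + 1) x
      ≤ ∑' x, ∑' bb : Fin (n + 1) → Bond d, ∑' c, ∑ j : Fin (n + 1),
          ((if c = bb j then μ (laceEvent (n + 1) bb x) else 0) +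
            μ (occ (FullLad n (mk j.1 c) (bb 0) (Fin.tail bb) x))) := by
        refine ENNReal.tsum_le_tsum fun x => ENNReal.tsum_le_tsum fun bb =>
          ENNReal.tsum_le_tsum fun c => Finset.sum_le_sum fun j _ => ?_
        refine le_trans ?_ (add_le_add_right (measure_lace_pivotal_le hμ n bb x j c) _)
        by_cases hc : c = bb j
        · rw [if_pos hc]
          exact (measure_mono Set.inter_subset_left).trans (le_add_right le_rfl)
        · rw [if_neg hc, zero_add]
          exact measure_mono fun ω hω => ⟨hω.1, hω.2.resolve_left hc⟩
    _ = ∑ j : Fin (n + 1), (∑' x, ∑' bb : Fin (n + 1) → Bond d, μ (laceEvent (n + 1) bb x) +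
          ∑' c, ∑' x, ∑' bb : Fin (n + 1) → Bond d,
            μ (occ (FullLad n (mk j.1 c) (bb 0) (Fin.tail bb) x))) := by
        have hswap : ∀ {α : Type} (f : α → Fin (n + 1) → ℝ≥0∞),
            ∑' a, ∑ j, f a j = ∑ j, ∑' a, f a j := fun f =>
          Summable.tsum_finsetSum fun _ _ => ENNReal.summable
        simp only [hswap]
        refine Finset.sum_congr rfl fun j _ => ?_
        simp only [ENNReal.tsum_add, tsum_ite_eq]
        congr 1
        symm
        rw [ENNReal.tsum_comm]
        exact tsum_congr fun x => ENNReal.tsum_comm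
    _ ≤ _ := by
        refine Finset.sum_le_sum fun j _ => add_le_add ?_ ?_
        · exact (ENNReal.tsum_le_tsum fun x => ENNReal.tsum_le_tsum fun bb =>
            measure_lace_le hμ n bb x).trans (tsum_FullLad_le hμ n _)
        · refine (ENNReal.tsum_le_tsum fun c => tsum_FullLad_le hμ n _).trans (le_of_eq ?_)
          rw [ENNReal.tsum_comm]
          refine tsum_congr fun v => ?_
          rw [ENNReal.tsum_comm]
          exact tsum_congr fun u => ENNReal.tsum_mul_left

end Assembly

/-- The bound (PiN-diagbd): for `N ≥ 1`,
`Σ_x Π_p^{(N)}(x) ≤ N(1+2T_p^{(1)})((T_p^{(1)}+T̃_p)(2T_p^{(1)})^{N-1}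
  + H_p (2T_p^{(1)})^{(N-2)∨0})`. -/
theorem stmt16 {d : ℕ} (μ : Measure (Config d)) (q : Vert d → ℝ≥0∞)
    (hμ : IsBernoulliField μ (fun u v => q (v - u)))
    (htrans : ∀ u x : Vert d, μ (connEvent u x) = μ (connEvent 0 (x - u)))
    (N : ℕ) (hN : 1 ≤ N) :
    ∑' x : Vert d, PiCoef μ N x ≤
      (N : ℝ≥0∞) * (1 + 2 * Tri μ q 1) *
        ((Tri μ q 1 + TriTilde μ q) * (2 * Tri μ q 1) ^ (N - 1) +
          Hdiag μ q * (2 * Tri μ q 1) ^ (N - 2)) := by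
  obtain ⟨n, rfl⟩ : ∃ n, N = n + 1 := ⟨N - 1, by omega⟩
  have hwt : ∀ f : Vert d → ℝ≥0∞, wt 1 f = f := fun f => by
    funext x
    have h1 : ∀ k : ℤ, (1 : ℝ≥0∞) ^ k = 1 := fun k => by
      cases k <;> simp
    rw [wt, h1, mul_one]
  have hT : ∀ x, ∑' v, conv (conv q (phi μ)) (phi μ) v * conv q (phi μ) (v - x) ≤
      Tri μ q 1 := fun x => by
    simp only [Tri, hwt]
    exact le_iSup (fun x => ∑' v, conv (conv q (phi μ)) (phi μ) v * conv q (phi μ) (v - x)) x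
  have hTt : ∀ x, ∑' v, conv (conv (conv q (phi μ)) q) (phi μ) v * conv q (phi μ) (v - x) ≤
      TriTilde μ q := fun x =>
    le_iSup (fun x => ∑' v, conv (conv (conv q (phi μ)) q) (phi μ) v * conv q (phi μ) (v - x)) x
  have hH : ∀ x y, ∑' u, ∑' v, ∑' w, conv q (phi μ) u * conv (conv (phi μ) q) (phi μ) (v - u) *
      conv q (phi μ) (v - x) * conv q (phi μ) (w - u) * conv q (phi μ) (y + w - v) ≤
      Hdiag μ q := fun x y =>
    le_iSup₂ (f := fun x y => ∑' u, ∑' v, ∑' w, conv q (phi μ) u *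
      conv (conv (phi μ) q) (phi μ) (v - u) * conv q (phi μ) (v - x) * conv q (phi μ) (w - u) *
      conv q (phi μ) (y + w - v)) x y
  set T := Tri μ q 1
  set Tt := TriTilde μ q
  set H := Hdiag μ q
  have hstart : ∀ (f : Vert d → Vert d → ℝ≥0∞) (B : ℝ≥0∞), (∀ u v, f u v ≤ B) →
      ∑' v, ∑' u, μ (occ (Pa (0 : Vert d) u ⋄ Pa u v ⋄ Pa 0 v)) * f u v ≤ (1 + 2 * T) * B :=
    fun f B hf => by
      refine (ENNReal.tsum_le_tsum fun v => ENNReal.tsum_le_tsum fun u =>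
        mul_le_mul_right (hf u v) _).trans ?_
      simp only [ENNReal.tsum_mul_right]
      exact mul_le_mul_left (tsum_start_le hμ htrans hT) _
  have hBn : H * (if n = 0 then 0 else (2 * T) ^ (n - 1)) ≤ H * (2 * T) ^ (n + 1 - 2) := by
    refine mul_le_mul_right ?_ _
    split_ifs with h
    · exact bot_le
    · exact le_of_eq (by congr 1)
  refine (tsum_PiCoef_le hμ n).trans ?_
  calc _ ≤ ∑ j : Fin (n + 1), ((1 + 2 * T) * (T * (2 * T) ^ n) +
        (1 + 2 * T) * (Tt * (2 * T) ^ n + H * (2 * T) ^ (n + 1 - 2))) := by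
        refine Finset.sum_le_sum fun j _ => add_le_add (hstart _ _ fun u v => ?_)
          (hstart _ _ fun u v => ?_)
        · exact (La_none_le hμ htrans n u v).trans (ladSum_le (one_le_phi_zero hμ) hT n _)
        · exact (tsum_La_mk_le hμ htrans rfl rfl rfl hT hTt hH n j.1 (by omega) u v).trans
            (add_le_add_right hBn _)
    _ = _ := by
        rw [Finset.sum_const, Finset.card_univ, Fintype.card_fin, nsmul_eq_mul,
          Nat.add_sub_cancel]
        ring
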